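/- Let s ∈ (0,1) and R > 0. There is a constant C = C(s,R) such that the following holds. Let q₁, q₂ : ℂ → ℂ be Schwartz functions with ‖q₁‖_{H^{s,s}} ≤ R and ‖q₂‖_{H^{s,s}} ≤ R, and for j = 1,2 and each k ∈ ℂ let (u₁^{(j)}(·,k), u₂^{(j)}(·,k)) be the bounded continuous scattering solutions for the potential q_j, and define 𝓕[q_j](k) = (i/(2π)) ∫_ℂ e_{−k}(z) q_j(z) conj(u₁^{(j)}(z,k)) dA(z). Then ‖𝓕[q₂] − 𝓕[q₁]‖_{L²(ℂ)} ≤ C ‖q₂ − q₁‖_{H^{s,s}}. -/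

import Mathlib

open MeasureTheory Complex ComplexConjugate Filter Bornology
open scoped ENNReal Topology SchwartzMap

noncomputable section

/-- `e_k(z) = exp(i(conj k · z + k · conj z)/2)`. -/
def ek (k z : ℂ) : ℂ := Complex.exp (Complex.I * (conj k * z + k * conj z) / 2)

/-- The solid Cauchy transform `∂̄⁻¹[h](z) = (1/π) ∫ h(w)/(z-w) dA(w)`. -/
def dbarInv (h : ℂ → ℂ) (z : ℂ) : ℂ := (Real.pi : ℂ)⁻¹ * ∫ w : ℂ, h w / (z - w)

/-- The solid Cauchy transform `∂_z⁻¹[h](z) = (1/π) ∫ h(w)/(conj z - conj w) dA(w)`. -/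
def dzInv (h : ℂ → ℂ) (z : ℂ) : ℂ := (Real.pi : ℂ)⁻¹ * ∫ w : ℂ, h w / (conj z - conj w)

/-- The operator `S^k_q[F] = ∂̄⁻¹[e_{-k} q ∂_z⁻¹[e_k conj(q) F]]`. -/
def Sk (k : ℂ) (q F : ℂ → ℂ) : ℂ → ℂ :=
  dbarInv fun z => ek (-k) z * q z * dzInv (fun w => ek k w * conj (q w) * F w) z

/-- The Fourier transform on `ℂ ≅ ℝ²`. -/
def FT (f : ℂ → ℂ) (ξ : ℂ) : ℂ :=
  ∫ z : ℂ, Complex.exp (-(2 * Real.pi * Complex.I) * ((z.re * ξ.re + z.im * ξ.im : ℝ) : ℂ)) * f z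

/-- The inverse Fourier transform on `ℂ ≅ ℝ²`. -/
def FTinv (f : ℂ → ℂ) (x : ℂ) : ℂ :=
  ∫ ξ : ℂ, Complex.exp ((2 * Real.pi * Complex.I) * ((x.re * ξ.re + x.im * ξ.im : ℝ) : ℂ)) * f ξ

/-- `D^s`, the Fourier multiplier with symbol `|ξ|^s`. -/
def Ds (s : ℝ) (f : ℂ → ℂ) : ℂ → ℂ :=
  FTinv fun ξ => ((‖ξ‖ ^ s : ℝ) : ℂ) * FT f ξ

/-- The weighted Sobolev norm
`‖q‖_{H^{s,s}} = max {‖q‖₂, ‖D^s q‖₂, ‖|·|^s q‖₂}`, where by Plancherel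
`‖D^s q‖₂ = ‖ |ξ|^s (FT q)(ξ) ‖₂`. -/
def HssNorm (s : ℝ) (q : ℂ → ℂ) : ℝ≥0∞ :=
  max (eLpNorm q 2 volume)
    (max (eLpNorm (fun ξ : ℂ => ((‖ξ‖ ^ s : ℝ) : ℂ) * FT q ξ) 2 volume)
      (eLpNorm (fun z : ℂ => ((‖z‖ ^ s : ℝ) : ℂ) * q z) 2 volume))

/-- The Cauchy–Riemann operator `∂̄ = (∂/∂z₁ + i ∂/∂z₂)/2`. -/
def dbar (G : ℂ → ℂ) (z : ℂ) : ℂ := (fderiv ℝ G z 1 + Complex.I * fderiv ℝ G z Complex.I) / 2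

end

/-- `(u₁, u₂)` is a (bounded continuous) solution of the integral equations
`u₁ = 1 + ∂̄⁻¹[e_{-k} q conj u₂]`, `u₂ = ∂̄⁻¹[e_{-k} q conj u₁]`. -/
def IsScattering (q : ℂ → ℂ) (k : ℂ) (u₁ u₂ : ℂ → ℂ) : Prop :=
  Continuous u₁ ∧ IsBounded (Set.range u₁) ∧ Continuous u₂ ∧ IsBounded (Set.range u₂) ∧
  (∀ z : ℂ, u₁ z = 1 + dbarInv (fun w => ek (-k) w * q w * conj (u₂ w)) z) ∧
  (∀ z : ℂ, u₂ z = dbarInv (fun w => ek (-k) w * q w * conj (u₁ w)) z)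

/-- The scattering transform
`𝓕[q](k) = (i/(2π)) ∫ e_{-k}(z) q(z) conj(u₁(z,k)) dA(z)`. -/
noncomputable def scatTransform (q : ℂ → ℂ) (u₁ : ℂ → ℂ → ℂ) (k : ℂ) : ℂ :=
  Complex.I / (2 * (Real.pi : ℂ)) * ∫ z : ℂ, ek (-k) z * q z * conj (u₁ z k)

open FourierTransform in
/-- The Fourier integral of an integrable square-integrable function represents its `L²` Fourier
transform. -/
theorem coeFn_fourier_toLp_ae_eq {h : ℂ → ℂ} (h₁ : Integrable h) (h₂ : MemLp h 2) :
    (𝓕 (h₂.toLp h) : Lp ℂ 2 (volume : Measure ℂ)) =ᵐ[volume] 𝓕 h := by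
  have hc : Continuous (𝓕 h) :=
    VectorFourier.fourierIntegral_continuous Real.continuous_fourierChar
      (by exact continuous_inner) h₁
  refine ae_eq_of_integral_contDiff_smul_eq
    ((Lp.memLp (𝓕 (h₂.toLp h))).locallyIntegrable (by norm_num)) hc.locallyIntegrable ?_
  intro g hg hgc
  have hgc' : HasCompactSupport (fun x => (g x : ℂ)) := hgc.comp_left (g := fun x : ℝ => (x : ℂ)) rfl
  have hg' : ContDiff ℝ (⊤ : ℕ∞) (fun x => (g x : ℂ)) := ofRealCLM.contDiff.comp hg
  let G : 𝓢(ℂ, ℂ) := hgc'.toSchwartzMap hg'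
  have hG : ∀ x, G x = (g x : ℂ) := fun x => rfl
  have key := congrArg (fun T => T G) (Lp.fourier_toTemperedDistribution_eq (h₂.toLp h))
  simp only [TemperedDistribution.fourier_apply, Lp.toTemperedDistribution_apply] at key
  have e1 : ∫ x, g x • (𝓕 (h₂.toLp h) : Lp ℂ 2 (volume : Measure ℂ)) x
      = ∫ x, G x • (𝓕 (h₂.toLp h) : Lp ℂ 2 (volume : Measure ℂ)) x := by
    simp [hG]
  rw [e1, ← key]
  have e2 : ∫ x, (𝓕 G) x • (h₂.toLp h) x = ∫ x, (𝓕 (G : ℂ → ℂ)) x • h x := by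
    refine integral_congr_ae ?_
    filter_upwards [h₂.coeFn_toLp] with x hx
    rw [hx, SchwartzMap.fourier_coe]
  rw [e2]
  have := VectorFourier.integral_fourierIntegral_smul_eq_flip (μ := (volume : Measure ℂ))
    (ν := (volume : Measure ℂ)) (L := innerₗ ℂ) Real.continuous_fourierChar
    (by exact continuous_inner) (G.integrable) h₁
  rw [flip_innerₗ] at this
  have e3 : ∫ x, g x • 𝓕 h x = ∫ x, G x • 𝓕 h x := by simp [hG]
  rw [e3]
  exact this

open FourierTransform in
theorem lintegral_enorm_fourier_sq_le {h : ℂ → ℂ} (h₁ : Integrable h) :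
    ∫⁻ ξ, ‖𝓕 h ξ‖ₑ ^ 2 ≤ ∫⁻ x, ‖h x‖ₑ ^ 2 := by
  by_cases hfin : ∫⁻ x, ‖h x‖ₑ ^ 2 = ⊤
  · simp [hfin]
  have sq : ∀ f : ℂ → ℂ, eLpNorm f 2 volume = (∫⁻ x, ‖f x‖ₑ ^ 2) ^ (1 / 2 : ℝ) := fun f => by
    simp [eLpNorm_eq_lintegral_rpow_enorm_toReal]
  have h₂ : MemLp h 2 := by
    refine ⟨h₁.1, ?_⟩
    rw [sq]
    exact ENNReal.rpow_lt_top_of_nonneg (by norm_num) hfin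
  have hn : eLpNorm (𝓕 h) 2 volume = eLpNorm h 2 volume := by
    rw [← eLpNorm_congr_ae (coeFn_fourier_toLp_ae_eq h₁ h₂), ← eLpNorm_congr_ae h₂.coeFn_toLp,
      ← Lp.enorm_def, ← Lp.enorm_def]
    simp only [enorm_eq_nnnorm, ENNReal.coe_inj, ← NNReal.coe_inj, coe_nnnorm, Lp.norm_fourier_eq]
  rw [sq, sq] at hn
  exact (ENNReal.rpow_left_injective (x := 1 / 2) (by norm_num) hn).le

theorem continuous_ek : Continuous fun p : ℂ × ℂ => ek p.1 p.2 := by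
  unfold ek
  fun_prop

theorem ek_eq_exp_inner (k z : ℂ) : ek k z = cexp ((inner ℝ z k : ℝ) * I) := by
  unfold ek
  congr 1
  rw [Complex.inner]
  apply Complex.ext
  · simp; ring
  · simp

theorem norm_ek (k z : ℂ) : ‖ek k z‖ = 1 := by
  rw [ek_eq_exp_inner, norm_exp_ofReal_mul_I]

theorem enorm_ek (k z : ℂ) : ‖ek k z‖ₑ = 1 := by
  rw [← ofReal_norm, norm_ek, ENNReal.ofReal_one]

open FourierTransform in
theorem integral_ek_mul_eq_fourier (k : ℂ) (h : ℂ → ℂ) :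
    ∫ x, ek (-k) x * h x = 𝓕 h ((2 * Real.pi)⁻¹ • k) := by
  rw [Real.fourier_eq']
  congr 1
  ext x
  rw [ek_eq_exp_inner, smul_eq_mul, inner_smul_right, inner_neg_right]
  congr 4
  field_simp

theorem lintegral_comp_smul {f : ℂ → ℝ≥0∞} (hf : Measurable f) {r : ℝ} (hr : 0 < r) :
    ∫⁻ x : ℂ, f (r • x) = ENNReal.ofReal (r ^ 2)⁻¹ * ∫⁻ x, f x := by
  have := lintegral_map (μ := (volume : Measure ℂ)) hf (measurable_const_smul r)
  rw [← this, Measure.map_addHaar_smul _ hr.ne', lintegral_smul_measure, finrank_real_complex,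
    abs_of_pos (by positivity), smul_eq_mul]

open FourierTransform in
theorem lintegral_enorm_integral_ek_sq_le {h : ℂ → ℂ} (h₁ : Integrable h) :
    ∫⁻ k, ‖∫ x, ek (-k) x * h x‖ₑ ^ 2 ≤ ENNReal.ofReal ((2 * Real.pi) ^ 2) * ∫⁻ x, ‖h x‖ₑ ^ 2 := by
  have hc : Continuous (𝓕 h) :=
    VectorFourier.fourierIntegral_continuous Real.continuous_fourierChar
      (by exact continuous_inner) h₁
  simp_rw [integral_ek_mul_eq_fourier]
  rw [lintegral_comp_smul (f := fun ξ => ‖𝓕 h ξ‖ₑ ^ 2) (by fun_prop) (by positivity)]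
  rw [← inv_pow, inv_inv]
  exact mul_le_mul_right (lintegral_enorm_fourier_sq_le h₁) _

open FourierTransform in
theorem FT_eq_fourier (f : ℂ → ℂ) : FT f = 𝓕 f := by
  ext ξ
  rw [Real.fourier_eq', FT]
  congr 1
  ext z
  rw [smul_eq_mul, Complex.inner]
  congr 2
  push_cast
  simp [mul_re]
  ring

open FourierTransform in
theorem FTinv_eq_fourier (f : ℂ → ℂ) (x : ℂ) : FTinv f x = 𝓕 f (-x) := by
  rw [Real.fourier_eq', FTinv]
  congr 1
  ext z
  rw [smul_eq_mul, Complex.inner]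
  congr 2
  push_cast
  simp [mul_re]
  ring

theorem FTinv_FT (q : 𝓢(ℂ, ℂ)) (x : ℂ) : FTinv (FT q) x = q x := by
  rw [FTinv_eq_fourier, FT_eq_fourier, ← Real.fourierInv_eq_fourier_neg, ← SchwartzMap.fourier_coe,
    ← SchwartzMap.fourierInv_coe]
  simp

theorem measurable_FT (q : 𝓢(ℂ, ℂ)) : Measurable (FT q) := by
  rw [FT_eq_fourier, ← SchwartzMap.fourier_coe]
  exact (SchwartzMap.continuous _).measurable

theorem integrable_FT (q : 𝓢(ℂ, ℂ)) : Integrable (FT q) := by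
  rw [FT_eq_fourier, ← SchwartzMap.fourier_coe]
  exact SchwartzMap.integrable _

theorem lintegral_enorm_FTinv_sq_le {h : ℂ → ℂ} (h₁ : Integrable h) :
    ∫⁻ x, ‖FTinv h x‖ₑ ^ 2 ≤ ∫⁻ ξ, ‖h ξ‖ₑ ^ 2 := by
  simp_rw [FTinv_eq_fourier]
  rw [(Measure.measurePreserving_neg (volume : Measure ℂ)).lintegral_comp_emb
    (MeasurableEquiv.neg ℂ).measurableEmbedding (fun x => ‖FourierTransform.fourier h x‖ₑ ^ 2)]
  exact lintegral_enorm_fourier_sq_le h₁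

theorem sq_lintegral_mul_le {α : Type*} [MeasurableSpace α] {μ : Measure α} {f g : α → ℝ≥0∞}
    (hf : AEMeasurable f μ) (hg : AEMeasurable g μ) :
    (∫⁻ x, f x * g x ∂μ) ^ 2 ≤ (∫⁻ x, f x ^ 2 ∂μ) * ∫⁻ x, g x ^ 2 ∂μ := by
  have h := ENNReal.lintegral_mul_le_Lp_mul_Lq μ Real.HolderConjugate.two_two hf hg
  simp only [Pi.mul_apply, ENNReal.rpow_two] at h
  calc (∫⁻ x, f x * g x ∂μ) ^ 2
      ≤ ((∫⁻ x, f x ^ 2 ∂μ) ^ (1 / 2 : ℝ) * (∫⁻ x, g x ^ 2 ∂μ) ^ (1 / 2 : ℝ)) ^ 2 := by gcongr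
    _ = _ := by
      rw [mul_pow, ← ENNReal.rpow_two, ← ENNReal.rpow_two, ← ENNReal.rpow_mul, ← ENNReal.rpow_mul]
      norm_num

theorem sq_lintegral_mul_le_weighted {α : Type*} [MeasurableSpace α] {μ : Measure α}
    {w g : α → ℝ≥0∞} (hw : Measurable w) (hg : Measurable g) :
    (∫⁻ x, w x * g x ∂μ) ^ 2 ≤ (∫⁻ x, w x ∂μ) * ∫⁻ x, w x * g x ^ 2 ∂μ := by
  have h := sq_lintegral_mul_le (μ := μ.withDensity w) (f := fun _ => 1) (g := g)
    aemeasurable_const hg.aemeasurable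
  rw [lintegral_withDensity_eq_lintegral_mul _ hw (by fun_prop),
    lintegral_withDensity_eq_lintegral_mul _ hw (by fun_prop),
    lintegral_withDensity_eq_lintegral_mul _ hw (by fun_prop)] at h
  simpa using h

theorem ENNReal.add_sq_le (a b : ℝ≥0∞) : (a + b) ^ 2 ≤ 2 * (a ^ 2 + b ^ 2) := by
  have := ENNReal.rpow_add_le_mul_rpow_add_rpow a b (p := 2) (by norm_num)
  norm_num at this
  exact this

theorem ENNReal.mul_le_sq_add_sq (a b : ℝ≥0∞) : a * b ≤ a ^ 2 + b ^ 2 := by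
  rcases le_total a b with h | h
  · calc a * b ≤ b * b := by gcongr
      _ = b ^ 2 := (sq b).symm
      _ ≤ _ := le_add_self
  · calc a * b ≤ a * a := by gcongr
      _ = a ^ 2 := (sq a).symm
      _ ≤ _ := le_self_add

theorem ENNReal.rpow_le_rpow_of_nonpos {x y : ℝ≥0∞} {a : ℝ} (h : x ≤ y) (ha : a ≤ 0) :
    y ^ a ≤ x ^ a := by
  rw [← neg_neg a, ENNReal.rpow_neg, ENNReal.rpow_neg x, ENNReal.inv_le_inv]
  exact ENNReal.rpow_le_rpow h (by linarith)

theorem ENNReal.rpow_mul_rpow_le {x : ℝ≥0∞} {a b c : ℝ} (hx : x ≠ ⊤) (hc : c < 0) (h : a + b = c) :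
    x ^ a * x ^ b ≤ x ^ c := by
  by_cases h0 : x = 0
  · simp [h0, ENNReal.zero_rpow_of_neg hc]
  · rw [← ENNReal.rpow_add _ _ h0 hx, h]

/-- Young's inequality for negative powers. -/
theorem ENNReal.rpow_mul_rpow_le_add {x y : ℝ≥0∞} {a b c : ℝ} (hx : x ≠ ⊤) (hy : y ≠ ⊤)
    (ha : a ≤ 0) (hb : b ≤ 0) (hc : c < 0) (h : a + b = c) : x ^ a * y ^ b ≤ x ^ c + y ^ c := by
  rcases le_total x y with hxy | hxy
  · calc x ^ a * y ^ b ≤ x ^ a * x ^ b := by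
          exact mul_le_mul' le_rfl (ENNReal.rpow_le_rpow_of_nonpos hxy hb)
      _ ≤ x ^ c := ENNReal.rpow_mul_rpow_le hx hc h
      _ ≤ _ := le_self_add
  · calc x ^ a * y ^ b ≤ y ^ a * y ^ b := by
          exact mul_le_mul' (ENNReal.rpow_le_rpow_of_nonpos hxy ha) le_rfl
      _ ≤ y ^ c := ENNReal.rpow_mul_rpow_le hy hc h
      _ ≤ _ := le_add_self

theorem enorm_rpow_eq_ofReal {x : ℂ} (hx : x ≠ 0) (a : ℝ) :
    ‖x‖ₑ ^ a = ENNReal.ofReal (‖x‖ ^ a) := by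
  rw [← ofReal_norm, ENNReal.ofReal_rpow_of_pos (norm_pos_iff.2 hx)]

theorem lintegral_ball_enorm_rpow_lt_top {a : ℝ} (ha : -2 < a) :
    ∫⁻ x : ℂ in Metric.ball 0 1, ‖x‖ₑ ^ a < ⊤ := by
  have h := (integrableOn_ball_of_norm_le_rpow (μ := (volume : Measure ℂ)) (C := 1) (α := -a)
    (r := 1) (f := fun x : ℂ => ‖x‖ ^ a) (by simp) (by simp; linarith)
    (Eventually.of_forall fun x => by
      rw [neg_neg, one_mul, Real.norm_of_nonneg (by positivity)])
    (Measurable.aestronglyMeasurable (by fun_prop))).2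
  refine lt_of_le_of_lt (le_of_eq (lintegral_congr_ae ?_)) h
  refine ae_restrict_of_ae ?_
  filter_upwards [compl_mem_ae_iff.2 (measure_singleton (0 : ℂ))] with x hx
  rw [enorm_rpow_eq_ofReal hx, Real.enorm_of_nonneg (by positivity)]

theorem lintegral_one_add_enorm_rpow_lt_top {a : ℝ} (ha : a < -2) :
    ∫⁻ x : ℂ, (1 + ‖x‖ₑ) ^ a < ⊤ := by
  have h := finite_integral_one_add_norm (E := ℂ) (μ := volume) (r := -a) (by simp; linarith)
  refine lt_of_le_of_lt (le_of_eq (lintegral_congr fun x => ?_)) h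
  rw [neg_neg, ← ENNReal.ofReal_rpow_of_pos (by positivity), ENNReal.ofReal_add (by simp) (by simp)]
  simp

theorem lintegral_compl_ball_enorm_rpow_lt_top {a : ℝ} (ha : a < -2) :
    ∫⁻ x : ℂ in (Metric.ball 0 1)ᶜ, ‖x‖ₑ ^ a < ⊤ := by
  have h : ∫⁻ x : ℂ in (Metric.ball 0 1)ᶜ, ‖x‖ₑ ^ a ≤ 2 ^ (-a) * ∫⁻ x : ℂ, (1 + ‖x‖ₑ) ^ a := by
    rw [← lintegral_const_mul _ (by fun_prop)]
    refine le_trans (setLIntegral_mono (g := fun x => 2 ^ (-a) * (1 + ‖x‖ₑ) ^ a) (by fun_prop) ?_)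
      (setLIntegral_le_lintegral _ _)
    intro x hx
    have hx1 : 1 ≤ ‖x‖ₑ := by
      rw [← ofReal_norm]
      exact ENNReal.one_le_ofReal.2 (by simpa using hx)
    calc ‖x‖ₑ ^ a = 2 ^ (-a) * (2 * ‖x‖ₑ) ^ a := by
          rw [ENNReal.mul_rpow_of_ne_top (by simp) (by simp), ← mul_assoc,
            ← ENNReal.rpow_add _ _ (by simp) (by simp)]
          simp
      _ ≤ _ := by
          refine mul_le_mul' le_rfl (ENNReal.rpow_le_rpow_of_nonpos ?_ (by linarith))
          rw [two_mul]
          gcongr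
  exact h.trans_lt (ENNReal.mul_lt_top (by finiteness) (lintegral_one_add_enorm_rpow_lt_top ha))

/-- The convolution of two Riesz kernels is bounded by a Riesz kernel. -/
theorem exists_lintegral_enorm_rpow_mul_le {t : ℝ} (ht : 0 < t) (ht1 : t < 1) :
    ∃ C : ℝ≥0∞, C ≠ ⊤ ∧ ∀ a b : ℂ,
      ∫⁻ y, ‖a - y‖ₑ ^ (-1 - t) * ‖b - y‖ₑ ^ (-1 - t) ≤ C * ‖a - b‖ₑ ^ (-2 * t) := by
  set K : ℝ≥0∞ := ∫⁻ x : ℂ, ‖x‖ₑ ^ (-1 - t) * (max ‖x‖ₑ 1) ^ (-1 - t) with hK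
  have hKtop : K < ⊤ := by
    rw [hK, ← lintegral_add_compl _ (Metric.isOpen_ball (x := (0 : ℂ)) (ε := 1)).measurableSet]
    refine ENNReal.add_lt_top.2 ⟨?_, ?_⟩
    · refine lt_of_le_of_lt (setLIntegral_mono (by fun_prop) fun x _ => ?_)
        (lintegral_ball_enorm_rpow_lt_top (a := -1 - t) (by linarith))
      calc _ ≤ ‖x‖ₑ ^ (-1 - t) * 1 ^ (-1 - t) := by
            exact mul_le_mul' le_rfl
              (ENNReal.rpow_le_rpow_of_nonpos (le_max_right _ _) (by linarith))
        _ = _ := by simp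
    · refine lt_of_le_of_lt (setLIntegral_mono (by fun_prop) fun x _ => ?_)
        (lintegral_compl_ball_enorm_rpow_lt_top (a := -2 - 2 * t) (by linarith))
      calc _ ≤ ‖x‖ₑ ^ (-1 - t) * ‖x‖ₑ ^ (-1 - t) := by
            exact mul_le_mul' le_rfl
              (ENNReal.rpow_le_rpow_of_nonpos (le_max_left _ _) (by linarith))
        _ ≤ _ := ENNReal.rpow_mul_rpow_le (by simp) (by linarith) (by ring)
  refine ⟨2 * 2 ^ (2 * t) * K + 1, by finiteness, fun a b => ?_⟩
  by_cases hab : a = b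
  · subst hab
    rw [sub_self, enorm_zero, ENNReal.zero_rpow_of_neg (by linarith), ENNReal.mul_top (by simp)]
    exact le_top
  set r : ℝ := ‖a - b‖ / 2 with hr
  have hr0 : 0 < r := by
    have : 0 < ‖a - b‖ := norm_pos_iff.2 (sub_ne_zero.2 hab)
    positivity
  set ψ : ℂ → ℝ≥0∞ := fun x => ‖x‖ₑ ^ (-1 - t) * (max ‖x‖ₑ (ENNReal.ofReal r)) ^ (-1 - t) with hψ
  have hψm : Measurable ψ := by fun_prop
  have hpt : ∀ y, ‖a - y‖ₑ ^ (-1 - t) * ‖b - y‖ₑ ^ (-1 - t) ≤ ψ (a - y) + ψ (b - y) := by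
    intro y
    have tri : ‖a - b‖ ≤ ‖a - y‖ + ‖b - y‖ := by
      have := norm_sub_le (a - y) (b - y)
      simpa using this
    have key : ∀ u v : ℂ, ‖a - b‖ ≤ ‖u‖ + ‖v‖ → ‖u‖ ≤ ‖v‖ →
        ‖u‖ₑ ^ (-1 - t) * ‖v‖ₑ ^ (-1 - t) ≤ ψ u := by
      intro u v h1 h2
      simp only [hψ]
      refine mul_le_mul' le_rfl
        (ENNReal.rpow_le_rpow_of_nonpos (max_le ?_ ?_) (by linarith))
      · rw [← ofReal_norm, ← ofReal_norm]
        exact ENNReal.ofReal_le_ofReal h2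
      · rw [← ofReal_norm]
        exact ENNReal.ofReal_le_ofReal (by linarith)
    rcases le_total ‖a - y‖ ‖b - y‖ with h | h
    · exact (key _ _ tri h).trans le_self_add
    · rw [mul_comm]
      exact (key _ _ (by linarith) h).trans le_add_self
  have hψi : ∫⁻ x, ψ x = ENNReal.ofReal r ^ (-2 * t) * K := by
    have hsc := lintegral_comp_smul hψm hr0
    have : ∀ x : ℂ, ψ (r • x) = ENNReal.ofReal r ^ (-2 - 2 * t) *
        (‖x‖ₑ ^ (-1 - t) * (max ‖x‖ₑ 1) ^ (-1 - t)) := by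
      intro x
      simp only [hψ]
      have e : ‖r • x‖ₑ = ENNReal.ofReal r * ‖x‖ₑ := by
        rw [enorm_smul, Real.enorm_of_nonneg hr0.le]
      have e2 : max (ENNReal.ofReal r * ‖x‖ₑ) (ENNReal.ofReal r)
          = ENNReal.ofReal r * max ‖x‖ₑ 1 := by
        rw [Monotone.map_max (f := fun u : ℝ≥0∞ => ENNReal.ofReal r * u)
          fun _ _ h => mul_le_mul' le_rfl h, mul_one]
      have hr' : ENNReal.ofReal r ≠ 0 := by simpa using hr0
      rw [e, e2, ENNReal.mul_rpow_of_ne_top (by simp) (by simp),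
        ENNReal.mul_rpow_of_ne_top (by simp) (by simp),
        show (-2 - 2 * t : ℝ) = (-1 - t) + (-1 - t) by ring, ENNReal.rpow_add _ _ hr' (by simp)]
      ring
    simp_rw [this] at hsc
    rw [lintegral_const_mul _ (by fun_prop), ← hK] at hsc
    have hr' : ENNReal.ofReal r ≠ 0 := by simpa using hr0
    have e3 : ENNReal.ofReal (r ^ 2)⁻¹ = ENNReal.ofReal r ^ (-2 : ℝ) := by
      rw [ENNReal.ofReal_rpow_of_pos hr0, Real.rpow_neg hr0.le, Real.rpow_two]
    rw [e3] at hsc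
    have : ∫⁻ x, ψ x = ENNReal.ofReal r ^ (2 : ℝ) * (ENNReal.ofReal r ^ (-2 : ℝ) * ∫⁻ x, ψ x) := by
      rw [← mul_assoc, ← ENNReal.rpow_add _ _ hr' (by simp)]
      simp
    rw [this, ← hsc, ← mul_assoc, ← ENNReal.rpow_add _ _ hr' (by simp)]
    congr 2
    ring
  calc ∫⁻ y, ‖a - y‖ₑ ^ (-1 - t) * ‖b - y‖ₑ ^ (-1 - t)
      ≤ ∫⁻ y, (ψ (a - y) + ψ (b - y)) := lintegral_mono hpt
    _ = (∫⁻ x, ψ x) + ∫⁻ x, ψ x := by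
      rw [lintegral_add_left (by fun_prop), lintegral_sub_left_eq_self ψ a,
        lintegral_sub_left_eq_self ψ b]
    _ = 2 * 2 ^ (2 * t) * K * ‖a - b‖ₑ ^ (-2 * t) := by
      rw [hψi, ← two_mul, hr, ← ofReal_norm, ENNReal.ofReal_div_of_pos (by norm_num), div_eq_mul_inv,
        ENNReal.mul_rpow_of_ne_top (by simp) (by simp), ENNReal.inv_rpow, ← ENNReal.rpow_neg]
      simp only [ENNReal.ofReal_ofNat]
      rw [show -(-2 * t) = 2 * t by ring]
      ring
    _ ≤ _ := by
      gcongr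
      exact le_self_add

open Convolution in
theorem lintegral_enorm_integral_ek_sq_mul_le {f g : ℂ → ℂ} (hf : Integrable f)
    (hg : Integrable g) :
    ∫⁻ k, ‖∫ x, ek (-k) x * f x‖ₑ ^ 2 * ‖∫ x, ek (-k) x * g x‖ₑ ^ 2 ≤
      ENNReal.ofReal ((2 * Real.pi) ^ 2) * ∫⁻ x, (∫⁻ v, ‖f v‖ₑ * ‖g (x - v)‖ₑ) ^ 2 := by
  have h := lintegral_enorm_integral_ek_sq_le
    (hf.integrable_convolution (ContinuousLinearMap.mul ℂ ℂ) hg)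
  refine le_trans (le_of_eq (lintegral_congr fun k => ?_)) (h.trans ?_)
  · rw [integral_ek_mul_eq_fourier, integral_ek_mul_eq_fourier, integral_ek_mul_eq_fourier,
      Real.fourier_mul_convolution_eq hf hg, enorm_mul, mul_pow]
  · gcongr with x
    refine (enorm_integral_le_lintegral_enorm _).trans (le_of_eq (lintegral_congr fun v => ?_))
    simp [enorm_mul]

theorem ENNReal.rpow_mul_rpow_of_neg {x : ℝ≥0∞} {a b c : ℝ} (hx : x ≠ ⊤) (ha : a < 0) (hb : b < 0)
    (h : a + b = c) : x ^ a * x ^ b = x ^ c := by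
  by_cases h0 : x = 0
  · rw [h0, ENNReal.zero_rpow_of_neg ha, ENNReal.zero_rpow_of_neg hb,
      ENNReal.zero_rpow_of_neg (by linarith), ENNReal.top_mul_top]
  · rw [← ENNReal.rpow_add _ _ h0 hx, h]

theorem ENNReal.rpow_sq_half (x : ℝ≥0∞) (a : ℝ) : (x ^ (a / 2)) ^ 2 = x ^ a := by
  rw [← ENNReal.rpow_two, ← ENNReal.rpow_mul]
  congr 1
  ring

/-- Squared convolution of two functions with Cauchy kernels. -/
theorem exists_lintegral_sq_conv_le {t : ℝ} (ht : 0 < t) (ht1 : t < 1) :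
    ∃ C : ℝ≥0∞, C ≠ ⊤ ∧ ∀ (φ : ℂ → ℝ≥0∞), Measurable φ → ∀ z z' : ℂ,
      ∫⁻ x, (∫⁻ v, (φ v * ‖z - v‖ₑ⁻¹) * (φ (x - v) * ‖z' - (x - v)‖ₑ⁻¹)) ^ 2 ≤
      C * ∫⁻ v, ∫⁻ w, φ v ^ 2 * φ w ^ 2 * (‖z - v‖ₑ ^ (-1 + t) * ‖z' - w‖ₑ ^ (-1 + t)) *
        ‖z - (z' - w + v)‖ₑ ^ (-2 * t) := by
  obtain ⟨C, hC, hCb⟩ := exists_lintegral_enorm_rpow_mul_le ht ht1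
  refine ⟨2 * C, by finiteness, fun φ hφ z z' => ?_⟩
  set H : ℂ → ℂ → ℂ → ℝ≥0∞ := fun x v y => φ v * φ (x - y) *
    (‖z - v‖ₑ ^ ((-1 + t) / 2) * ‖z' - (x - y)‖ₑ ^ ((-1 + t) / 2)) *
    (‖z - y‖ₑ ^ ((-1 - t) / 2) * ‖z' - (x - v)‖ₑ ^ ((-1 - t) / 2)) with hH
  have hm : Measurable fun p : ℂ × ℂ × ℂ => H p.1 p.2.1 p.2.2 := by
    simp only [hH]; fun_prop
  have hhH : ∀ x v y, ((φ v * ‖z - v‖ₑ⁻¹) * (φ (x - v) * ‖z' - (x - v)‖ₑ⁻¹)) *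
      ((φ y * ‖z - y‖ₑ⁻¹) * (φ (x - y) * ‖z' - (x - y)‖ₑ⁻¹)) = H x v y * H x y v := by
    intro x v y
    have e : ∀ u : ℂ, ‖u‖ₑ⁻¹ = ‖u‖ₑ ^ ((-1 + t) / 2) * ‖u‖ₑ ^ ((-1 - t) / 2) := fun u => by
      rw [ENNReal.rpow_mul_rpow_of_neg (c := -1) (by simp) (by linarith) (by linarith) (by ring),
        ENNReal.rpow_neg_one]
    simp only [hH, e]
    ring
  have hsq : ∀ x, (∫⁻ v, (φ v * ‖z - v‖ₑ⁻¹) * (φ (x - v) * ‖z' - (x - v)‖ₑ⁻¹)) ^ 2 ≤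
      2 * ∫⁻ v, ∫⁻ y, H x v y ^ 2 := by
    intro x
    rw [sq, ← lintegral_lintegral_mul (by fun_prop) (by fun_prop)]
    have hmx : Measurable fun p : ℂ × ℂ => H x p.1 p.2 := by simp only [hH]; fun_prop
    calc _ ≤ ∫⁻ v, ∫⁻ y, (H x v y ^ 2 + H x y v ^ 2) := by
          refine lintegral_mono fun v => lintegral_mono fun y => ?_
          rw [hhH]
          exact ENNReal.mul_le_sq_add_sq _ _
      _ = ∫⁻ v, ((∫⁻ y, H x v y ^ 2) + ∫⁻ y, H x y v ^ 2) := by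
          refine lintegral_congr fun v => ?_
          rw [lintegral_add_left]
          simp only [hH]; fun_prop
      _ = (∫⁻ v, ∫⁻ y, H x v y ^ 2) + ∫⁻ v, ∫⁻ y, H x y v ^ 2 := by
          rw [lintegral_add_left]
          simp only [hH]; fun_prop
      _ = 2 * ∫⁻ v, ∫⁻ y, H x v y ^ 2 := by
          rw [lintegral_lintegral_swap (f := fun v y => H x y v ^ 2), two_mul]
          simp only [hH]; fun_prop
  calc _ ≤ ∫⁻ x, 2 * ∫⁻ v, ∫⁻ y, H x v y ^ 2 := lintegral_mono hsq
    _ = 2 * ∫⁻ x, ∫⁻ v, ∫⁻ y, H x v y ^ 2 := lintegral_const_mul' _ _ (by simp)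
    _ = 2 * ∫⁻ v, ∫⁻ w, ∫⁻ y, H (w + y) v y ^ 2 := by
      congr 1
      rw [lintegral_lintegral_swap (by simp only [hH]; fun_prop)]
      refine lintegral_congr fun v => ?_
      rw [lintegral_lintegral_swap (by simp only [hH]; fun_prop),
        lintegral_lintegral_swap (f := fun w y => H (w + y) v y ^ 2) (by simp only [hH]; fun_prop)]
      refine lintegral_congr fun y => ?_
      rw [lintegral_add_right_eq_self (fun x => H x v y ^ 2) y]
    _ ≤ 2 * ∫⁻ v, ∫⁻ w, C * (φ v ^ 2 * φ w ^ 2 *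
          (‖z - v‖ₑ ^ (-1 + t) * ‖z' - w‖ₑ ^ (-1 + t)) * ‖z - (z' - w + v)‖ₑ ^ (-2 * t)) := by
      gcongr with v w
      have : ∀ y, H (w + y) v y ^ 2 = φ v ^ 2 * φ w ^ 2 *
          (‖z - v‖ₑ ^ (-1 + t) * ‖z' - w‖ₑ ^ (-1 + t)) *
          (‖z - y‖ₑ ^ (-1 - t) * ‖(z' - w + v) - y‖ₑ ^ (-1 - t)) := by
        intro y
        simp only [hH, mul_pow, ENNReal.rpow_sq_half, add_sub_cancel_right]
        rw [show z' - (w + y - v) = z' - w + v - y by ring]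
      simp_rw [this]
      rw [lintegral_const_mul _ (by fun_prop)]
      refine (mul_le_mul' le_rfl (hCb _ _)).trans (le_of_eq ?_)
      ring
    _ = _ := by
      simp_rw [lintegral_const_mul' _ _ hC]
      rw [mul_assoc]

/-- The weight `ρ` satisfies a Kato type bound with exponents `-1 ± t`. -/
def KatoBound (t : ℝ) (ρ : ℂ → ℝ≥0∞) (Λ : ℝ≥0∞) : Prop :=
  Measurable ρ ∧ ∀ z, ∫⁻ v, ρ v * (‖z - v‖ₑ ^ (-1 - t) + ‖z - v‖ₑ ^ (-1 + t)) ≤ Λ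

theorem KatoBound.minus {t : ℝ} {ρ : ℂ → ℝ≥0∞} {Λ : ℝ≥0∞} (h : KatoBound t ρ Λ) (z : ℂ) :
    ∫⁻ v, ρ v * ‖v - z‖ₑ ^ (-1 - t) ≤ Λ := by
  refine le_trans (lintegral_mono fun v => ?_) (h.2 z)
  rw [enorm_sub_rev]
  exact mul_le_mul' le_rfl le_self_add

theorem KatoBound.plus {t : ℝ} {ρ : ℂ → ℝ≥0∞} {Λ : ℝ≥0∞} (h : KatoBound t ρ Λ) (z : ℂ) :
    ∫⁻ v, ρ v * ‖v - z‖ₑ ^ (-1 + t) ≤ Λ := by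
  refine le_trans (lintegral_mono fun v => ?_) (h.2 z)
  rw [enorm_sub_rev]
  exact mul_le_mul' le_rfl le_add_self

theorem KatoBound.inv {t : ℝ} {ρ : ℂ → ℝ≥0∞} {Λ : ℝ≥0∞} (h : KatoBound t ρ Λ)
    (ht0 : 0 < t) (z : ℂ) : ∫⁻ v, ρ v * ‖z - v‖ₑ⁻¹ ≤ Λ := by
  refine le_trans (lintegral_mono fun v => ?_) (h.2 z)
  refine mul_le_mul' le_rfl ?_
  rw [← ENNReal.rpow_neg_one]
  by_cases h1 : ‖z - v‖ₑ ≤ 1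
  · exact (ENNReal.rpow_le_rpow_of_exponent_ge h1 (by linarith)).trans le_self_add
  · exact (ENNReal.rpow_le_rpow_of_exponent_le (not_le.1 h1).le (by linarith)).trans le_add_self

theorem exists_lintegral_lintegral_sq_conv_le {t : ℝ} (ht : 0 < t) (ht1 : t < 1) :
    ∃ C : ℝ≥0∞, C ≠ ⊤ ∧ ∀ (φ : ℂ → ℝ≥0∞), Measurable φ → ∀ ρ Λ, KatoBound t ρ Λ →
      ∫⁻ z, ∫⁻ z', ρ z * ρ z' *
        ∫⁻ x, (∫⁻ v, (φ v * ‖z - v‖ₑ⁻¹) * (φ (x - v) * ‖z' - (x - v)‖ₑ⁻¹)) ^ 2 ≤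
      C * (∫⁻ v, φ v ^ 2) ^ 2 * Λ ^ 2 := by
  obtain ⟨C, hC, hCb⟩ := exists_lintegral_sq_conv_le ht ht1
  refine ⟨C * 2, by finiteness, fun φ hφ ρ Λ hρ => ?_⟩
  have hρm := hρ.1
  set G : ℂ → ℂ → ℂ → ℂ → ℝ≥0∞ := fun z z' v w => ρ z * ρ z' *
    (φ v ^ 2 * φ w ^ 2 * (‖z - v‖ₑ ^ (-1 + t) * ‖z' - w‖ₑ ^ (-1 + t)) *
        ‖z - (z' - w + v)‖ₑ ^ (-2 * t)) with hG
  have hm : Measurable fun p : ℂ × ℂ × ℂ × ℂ => G p.1 p.2.1 p.2.2.1 p.2.2.2 := by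
    simp only [hG]; fun_prop
  calc _ ≤ ∫⁻ z, ∫⁻ z', C * ∫⁻ v, ∫⁻ w, G z z' v w := by
        refine lintegral_mono fun z => lintegral_mono fun z' => ?_
        refine (mul_le_mul' le_rfl (hCb φ hφ z z')).trans (le_of_eq ?_)
        rw [mul_left_comm]
        simp only [hG]
        congr 1
        rw [← lintegral_const_mul _ (by fun_prop)]
        refine lintegral_congr fun v => ?_
        rw [← lintegral_const_mul _ (by fun_prop)]
    _ = C * ∫⁻ z, ∫⁻ z', ∫⁻ v, ∫⁻ w, G z z' v w := by
        simp_rw [lintegral_const_mul' _ _ hC]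
    _ = C * ∫⁻ v, ∫⁻ w, ∫⁻ z', ∫⁻ z, G z z' v w := by
        congr 1
        calc _ = ∫⁻ z, ∫⁻ v, ∫⁻ z', ∫⁻ w, G z z' v w := by
              refine lintegral_congr fun z => lintegral_lintegral_swap ?_
              simp only [hG]; fun_prop
          _ = ∫⁻ v, ∫⁻ z, ∫⁻ z', ∫⁻ w, G z z' v w := by
              refine lintegral_lintegral_swap ?_
              simp only [hG]; fun_prop
          _ = ∫⁻ v, ∫⁻ z, ∫⁻ w, ∫⁻ z', G z z' v w := by
              refine lintegral_congr fun v => lintegral_congr fun z => lintegral_lintegral_swap ?_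
              simp only [hG]; fun_prop
          _ = ∫⁻ v, ∫⁻ w, ∫⁻ z, ∫⁻ z', G z z' v w := by
              refine lintegral_congr fun v => lintegral_lintegral_swap ?_
              simp only [hG]; fun_prop
          _ = _ := by
              refine lintegral_congr fun v => lintegral_congr fun w => lintegral_lintegral_swap ?_
              simp only [hG]; fun_prop
    _ ≤ C * ∫⁻ v, ∫⁻ w, φ v ^ 2 * φ w ^ 2 * (2 * Λ ^ 2) := by
        gcongr with v w
        have h1 : ∀ z', ∫⁻ z, G z z' v w ≤
            φ v ^ 2 * φ w ^ 2 * (2 * Λ) * (ρ z' * ‖z' - w‖ₑ ^ (-1 + t)) := by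
          intro z'
          calc ∫⁻ z, G z z' v w ≤ ∫⁻ z, φ v ^ 2 * φ w ^ 2 * (ρ z' * ‖z' - w‖ₑ ^ (-1 + t)) *
                (ρ z * ‖z - v‖ₑ ^ (-1 - t) + ρ z * ‖z - (z' - w + v)‖ₑ ^ (-1 - t)) := by
                refine lintegral_mono fun z => ?_
                have := ENNReal.rpow_mul_rpow_le_add (x := ‖z - v‖ₑ) (y := ‖z - (z' - w + v)‖ₑ)
                  (a := -1 + t) (b := -2 * t) (c := -1 - t) (by simp) (by simp) (by linarith)
                  (by linarith) (by linarith) (by ring)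
                calc G z z' v w = φ v ^ 2 * φ w ^ 2 * (ρ z' * ‖z' - w‖ₑ ^ (-1 + t)) * (ρ z *
                      (‖z - v‖ₑ ^ (-1 + t) * ‖z - (z' - w + v)‖ₑ ^ (-2 * t))) := by
                      simp only [hG]; ring
                  _ ≤ _ := by
                      rw [← mul_add]
                      exact mul_le_mul' le_rfl (mul_le_mul' le_rfl this)
            _ = φ v ^ 2 * φ w ^ 2 * (ρ z' * ‖z' - w‖ₑ ^ (-1 + t)) *
                ((∫⁻ z, ρ z * ‖z - v‖ₑ ^ (-1 - t)) +
                  ∫⁻ z, ρ z * ‖z - (z' - w + v)‖ₑ ^ (-1 - t)) := by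
                rw [lintegral_const_mul _ (by fun_prop), lintegral_add_left (by fun_prop)]
            _ ≤ φ v ^ 2 * φ w ^ 2 * (ρ z' * ‖z' - w‖ₑ ^ (-1 + t)) * (Λ + Λ) :=
                mul_le_mul' le_rfl (add_le_add (hρ.minus _) (hρ.minus _))
            _ = _ := by ring
        refine (lintegral_mono h1).trans ?_
        rw [lintegral_const_mul _ (by fun_prop)]
        refine (mul_le_mul' le_rfl (hρ.plus _)).trans (le_of_eq ?_)
        ring
    _ = C * ((∫⁻ v, φ v ^ 2) * (∫⁻ v, φ v ^ 2) * (2 * Λ ^ 2)) := by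
        rw [← lintegral_lintegral_mul (by fun_prop) (by fun_prop),
          ← lintegral_mul_const _ (by fun_prop)]
        congr 1
        refine lintegral_congr fun v => ?_
        rw [lintegral_mul_const _ (by fun_prop)]
    _ = _ := by ring

theorem measurable_integral_ek_mul {p : ℂ → ℂ} {K : ℂ → ℂ → ℂ} (hp : Measurable p)
    (hK : Measurable fun x : ℂ × ℂ => K x.1 x.2) :
    Measurable fun x : ℂ × ℂ => ∫ v, ek (-x.1) v * (p v * K x.2 v) := by
  have hk : Measurable fun x : (ℂ × ℂ) × ℂ => ek (-x.1.1) x.2 :=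
    continuous_ek.measurable.comp (g := fun p : ℂ × ℂ => ek p.1 p.2)
      (f := fun x : (ℂ × ℂ) × ℂ => (-x.1.1, x.2)) (by fun_prop)
  have hK' : Measurable fun x : (ℂ × ℂ) × ℂ => K x.1.2 x.2 :=
    hK.comp (g := fun x : ℂ × ℂ => K x.1 x.2)
      (f := fun x : (ℂ × ℂ) × ℂ => (x.1.2, x.2)) (by fun_prop)
  have : StronglyMeasurable fun x : (ℂ × ℂ) × ℂ => ek (-x.1.1) x.2 * (p x.2 * K x.1.2 x.2) :=
    (hk.mul ((hp.comp measurable_snd).mul hK')).stronglyMeasurable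
  exact (this.integral_prod_right).measurable

theorem lintegral_sq_lintegral_mul {ρ : ℂ → ℝ≥0∞} {A : ℂ → ℂ → ℝ≥0∞} (hρm : Measurable ρ)
    (hAm : Measurable fun x : ℂ × ℂ => A x.1 x.2) :
    ∫⁻ k, (∫⁻ z, ρ z * A k z) ^ 2 = ∫⁻ z, ∫⁻ z', ρ z * ρ z' * ∫⁻ k, A k z * A k z' := by
  have hAz : ∀ k, Measurable (A k) := fun k => hAm.comp (measurable_prodMk_left (x := k))
  calc _ = ∫⁻ k, ∫⁻ z, ∫⁻ z', ρ z * ρ z' * (A k z * A k z') := by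
        refine lintegral_congr fun k => ?_
        rw [sq, ← lintegral_lintegral_mul (by fun_prop) (by fun_prop)]
        refine lintegral_congr fun z => lintegral_congr fun z' => ?_
        ring
    _ = ∫⁻ z, ∫⁻ z', ∫⁻ k, ρ z * ρ z' * (A k z * A k z') := by
        rw [lintegral_lintegral_swap (by fun_prop)]
        refine lintegral_congr fun z => lintegral_lintegral_swap (by fun_prop)
    _ = ∫⁻ z, ∫⁻ z', ρ z * ρ z' * ∫⁻ k, (A k z * A k z') := by
        refine lintegral_congr fun z => lintegral_congr fun z' => ?_
        rw [lintegral_const_mul _ (by fun_prop)]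

/-- The quartic estimate for oscillatory integrals against Cauchy kernels. -/
theorem exists_lintegral_sq_lintegral_le {t : ℝ} (ht : 0 < t) (ht1 : t < 1) :
    ∃ C : ℝ≥0∞, C ≠ ⊤ ∧ ∀ (p : ℂ → ℂ) (K : ℂ → ℂ → ℂ), Measurable p →
      Measurable (fun x : ℂ × ℂ => K x.1 x.2) → (∀ z v, ‖K z v‖ₑ ≤ ‖z - v‖ₑ⁻¹) →
      (∀ z, Integrable fun v => p v * K z v) → ∀ ρ Λ, KatoBound t ρ Λ →
      ∫⁻ k, (∫⁻ z, ρ z * ‖∫ v, ek (-k) v * (p v * K z v)‖ₑ ^ 2) ^ 2 ≤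
      C * (∫⁻ v, ‖p v‖ₑ ^ 2) ^ 2 * Λ ^ 2 := by
  obtain ⟨C, hC, hCb⟩ := exists_lintegral_lintegral_sq_conv_le ht ht1
  refine ⟨ENNReal.ofReal ((2 * Real.pi) ^ 2) * C, by finiteness,
    fun p K hp hK hKle hint ρ Λ hρ => ?_⟩
  calc _ = ∫⁻ z, ∫⁻ z', ρ z * ρ z' * ∫⁻ k, ‖∫ v, ek (-k) v * (p v * K z v)‖ₑ ^ 2 *
          ‖∫ v, ek (-k) v * (p v * K z' v)‖ₑ ^ 2 :=
        lintegral_sq_lintegral_mul hρ.1 ((measurable_integral_ek_mul hp hK).enorm.pow_const 2)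
    _ ≤ ∫⁻ z, ∫⁻ z', ρ z * ρ z' * (ENNReal.ofReal ((2 * Real.pi) ^ 2) *
          ∫⁻ x, (∫⁻ v, (‖p v‖ₑ * ‖z - v‖ₑ⁻¹) * (‖p (x - v)‖ₑ * ‖z' - (x - v)‖ₑ⁻¹)) ^ 2) := by
        gcongr with z z'
        refine (lintegral_enorm_integral_ek_sq_mul_le (hint z) (hint z')).trans ?_
        gcongr with x v <;> rw [enorm_mul] <;> exact mul_le_mul' le_rfl (hKle _ _)
    _ = ENNReal.ofReal ((2 * Real.pi) ^ 2) * ∫⁻ z, ∫⁻ z', ρ z * ρ z' *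
          ∫⁻ x, (∫⁻ v, (‖p v‖ₑ * ‖z - v‖ₑ⁻¹) * (‖p (x - v)‖ₑ * ‖z' - (x - v)‖ₑ⁻¹)) ^ 2 := by
        simp_rw [mul_left_comm _ (ENNReal.ofReal _)]
        simp_rw [lintegral_const_mul' _ _ ENNReal.ofReal_ne_top]
    _ ≤ _ := by
        refine (mul_le_mul' le_rfl (hCb _ (by fun_prop) ρ Λ hρ)).trans (le_of_eq ?_)
        ring

/-- `h` is measurable and its absolute Cauchy potential is bounded by `B`. -/
def CauchyBound (h : ℂ → ℂ) (B : ℝ≥0∞) : Prop :=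
  Measurable h ∧ ∀ z, ∫⁻ v, ‖h v‖ₑ * ‖z - v‖ₑ⁻¹ ≤ B

theorem enorm_div_le_mul_inv (a b : ℂ) : ‖a / b‖ₑ ≤ ‖a‖ₑ * ‖b‖ₑ⁻¹ := by
  by_cases hb : b = 0
  · simp [hb]
  · rw [div_eq_mul_inv, enorm_mul, enorm_inv hb]

theorem enorm_pi_inv_le_one : ‖(Real.pi : ℂ)⁻¹‖ₑ ≤ 1 := by
  rw [← ofReal_norm, ← ENNReal.ofReal_one]
  refine ENNReal.ofReal_le_ofReal ?_
  rw [norm_inv, Complex.norm_of_nonneg Real.pi_pos.le]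
  exact inv_le_one_of_one_le₀ (by linarith [Real.pi_gt_three])

theorem enorm_dbarInv_le (h : ℂ → ℂ) (z : ℂ) :
    ‖dbarInv h z‖ₑ ≤ ∫⁻ v, ‖h v‖ₑ * ‖z - v‖ₑ⁻¹ := by
  rw [dbarInv, enorm_mul]
  refine (mul_le_mul' enorm_pi_inv_le_one (enorm_integral_le_lintegral_enorm _)).trans ?_
  rw [one_mul]
  exact lintegral_mono fun v => enorm_div_le_mul_inv _ _

theorem enorm_dzInv_le (h : ℂ → ℂ) (z : ℂ) :
    ‖dzInv h z‖ₑ ≤ ∫⁻ v, ‖h v‖ₑ * ‖z - v‖ₑ⁻¹ := by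
  rw [dzInv, enorm_mul]
  refine (mul_le_mul' enorm_pi_inv_le_one (enorm_integral_le_lintegral_enorm _)).trans ?_
  rw [one_mul]
  refine lintegral_mono fun v => (enorm_div_le_mul_inv _ _).trans (le_of_eq ?_)
  rw [← map_sub, RCLike.enorm_conj]

theorem conj_dbarInv (h : ℂ → ℂ) (z : ℂ) :
    conj (dbarInv h z) = dzInv (fun w => conj (h w)) z := by
  rw [dbarInv, dzInv, map_mul, ← integral_conj]
  simp

theorem measurable_dbarInv {h : ℂ → ℂ} (hh : Measurable h) : Measurable (dbarInv h) := by
  have : StronglyMeasurable fun p : ℂ × ℂ => h p.2 / (p.1 - p.2) :=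
    Measurable.stronglyMeasurable (by fun_prop)
  exact this.integral_prod_right.measurable.const_mul _

theorem measurable_dzInv {h : ℂ → ℂ} (hh : Measurable h) : Measurable (dzInv h) := by
  have : StronglyMeasurable fun p : ℂ × ℂ => h p.2 / (conj p.1 - conj p.2) := by
    refine Measurable.stronglyMeasurable ?_
    have : Measurable (fun z : ℂ => conj z) := continuous_conj.measurable
    fun_prop
  exact this.integral_prod_right.measurable.const_mul _

namespace CauchyBound

variable {f g : ℂ → ℂ} {B B' M : ℝ≥0∞}

theorem integrable (hf : CauchyBound f B) (hB : B ≠ ⊤) (z : ℂ) :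
    Integrable fun w => f w / (z - w) := by
  have hm := hf.1
  refine ⟨Measurable.aestronglyMeasurable (by fun_prop), ?_⟩
  exact ((lintegral_mono fun v => enorm_div_le_mul_inv _ _).trans (hf.2 z)).trans_lt hB.lt_top

theorem integrable_conj (hf : CauchyBound f B) (hB : B ≠ ⊤) (z : ℂ) :
    Integrable fun w => f w / (conj z - conj w) := by
  have hm := hf.1
  have hc : Measurable (fun z : ℂ => conj z) := continuous_conj.measurable
  refine ⟨Measurable.aestronglyMeasurable (by fun_prop), ?_⟩
  refine ((lintegral_mono fun v => ?_).trans (hf.2 z)).trans_lt hB.lt_top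
  refine (enorm_div_le_mul_inv _ _).trans (le_of_eq ?_)
  rw [← map_sub, RCLike.enorm_conj]

theorem enorm_le (hf : CauchyBound f B) (z : ℂ) : ‖dbarInv f z‖ₑ ≤ B :=
  (enorm_dbarInv_le f z).trans (hf.2 z)

theorem mono (hf : CauchyBound f B) (hg : Measurable g) (h : ∀ v, ‖g v‖ₑ ≤ ‖f v‖ₑ) :
    CauchyBound g B :=
  ⟨hg, fun z => (lintegral_mono fun v => mul_le_mul' (h v) le_rfl).trans (hf.2 z)⟩

theorem mul (hf : CauchyBound f B) (hg : Measurable g) (hM : ∀ v, ‖g v‖ₑ ≤ M) :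
    CauchyBound (fun v => f v * g v) (M * B) := by
  have hm := hf.1
  refine ⟨by fun_prop, fun z => ?_⟩
  calc _ ≤ ∫⁻ v, M * (‖f v‖ₑ * ‖z - v‖ₑ⁻¹) := by
        refine lintegral_mono fun v => ?_
        rw [enorm_mul, mul_comm ‖f v‖ₑ, mul_assoc]
        exact mul_le_mul' (hM v) le_rfl
    _ = M * ∫⁻ v, ‖f v‖ₑ * ‖z - v‖ₑ⁻¹ := lintegral_const_mul _ (by fun_prop)
    _ ≤ _ := mul_le_mul' le_rfl (hf.2 z)

theorem add (hf : CauchyBound f B) (hg : CauchyBound g B') :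
    CauchyBound (fun v => f v + g v) (B + B') := by
  have hm := hf.1
  have hm' := hg.1
  refine ⟨by fun_prop, fun z => ?_⟩
  calc _ ≤ ∫⁻ v, (‖f v‖ₑ * ‖z - v‖ₑ⁻¹ + ‖g v‖ₑ * ‖z - v‖ₑ⁻¹) := by
        refine lintegral_mono fun v => ?_
        rw [← add_mul]
        exact mul_le_mul' (enorm_add_le _ _) le_rfl
    _ ≤ _ := by
        rw [lintegral_add_left (by fun_prop)]
        exact add_le_add (hf.2 z) (hg.2 z)

theorem dbarInv_add (hf : CauchyBound f B) (hg : CauchyBound g B') (hB : B ≠ ⊤) (hB' : B' ≠ ⊤)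
    (z : ℂ) : dbarInv (fun v => f v + g v) z = dbarInv f z + dbarInv g z := by
  simp only [dbarInv, add_div]
  rw [integral_add (hf.integrable hB z) (hg.integrable hB' z), mul_add]

theorem dbarInv_sub (hf : CauchyBound f B) (hg : CauchyBound g B') (hB : B ≠ ⊤) (hB' : B' ≠ ⊤)
    (z : ℂ) : dbarInv (fun v => f v - g v) z = dbarInv f z - dbarInv g z := by
  simp only [dbarInv, sub_div]
  rw [integral_sub (hf.integrable hB z) (hg.integrable hB' z), mul_sub]

theorem integrable_prod (hf : CauchyBound f B) (hg : CauchyBound g B') (hB : B ≠ ⊤)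
    (hB' : B' ≠ ⊤) (z : ℂ) :
    Integrable (fun p : ℂ × ℂ => f p.1 / (z - p.1) * (g p.2 / (p.1 - p.2)))
      (volume.prod volume) := by
  have hm := hf.1
  have hm' := hg.1
  refine ⟨Measurable.aestronglyMeasurable (by fun_prop), ?_⟩
  refine lt_of_le_of_lt ?_ (ENNReal.mul_lt_top hB.lt_top hB'.lt_top)
  rw [lintegral_prod _ (by fun_prop)]
  calc _ ≤ ∫⁻ w, (‖f w‖ₑ * ‖z - w‖ₑ⁻¹) * B' := by
        refine lintegral_mono fun w => ?_
        simp only [enorm_mul]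
        rw [lintegral_const_mul _ (by fun_prop)]
        refine mul_le_mul' (enorm_div_le_mul_inv _ _) ?_
        exact (lintegral_mono fun v => enorm_div_le_mul_inv _ _).trans (hg.2 w)
    _ = (∫⁻ w, ‖f w‖ₑ * ‖z - w‖ₑ⁻¹) * B' := lintegral_mul_const _ (by fun_prop)
    _ ≤ _ := mul_le_mul' (hf.2 z) le_rfl

/-- The Cauchy transform is a Rota–Baxter operator of weight zero. -/
theorem dbarInv_mul_dbarInv (hf : CauchyBound f B) (hg : CauchyBound g B') (hB : B ≠ ⊤)
    (hB' : B' ≠ ⊤) (z : ℂ) :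
    dbarInv f z * dbarInv g z =
      dbarInv (fun w => f w * dbarInv g w) z + dbarInv (fun w => g w * dbarInv f w) z := by
  have h1 := hf.integrable_prod hg hB hB' z
  have h2 : Integrable (fun p : ℂ × ℂ => g p.2 / (z - p.2) * (f p.1 / (p.2 - p.1)))
      (volume.prod volume) := (hg.integrable_prod hf hB' hB z).swap
  have key : (∫ w, f w / (z - w)) * ∫ v, g v / (z - v) =
      (∫ w, f w / (z - w) * ∫ v, g v / (w - v)) + ∫ v, g v / (z - v) * ∫ w, f w / (v - w) := by
    calc (∫ w, f w / (z - w)) * ∫ v, g v / (z - v)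
        = ∫ w, ∫ v, f w / (z - w) * (g v / (z - v)) := by
          simp_rw [integral_const_mul, integral_mul_const]
      _ = ∫ w, ∫ v, (f w / (z - w) * (g v / (w - v)) + g v / (z - v) * (f w / (v - w))) := by
          refine integral_congr_ae ?_
          filter_upwards [compl_mem_ae_iff.2 (measure_singleton z)] with w hw
          refine integral_congr_ae ?_
          filter_upwards [compl_mem_ae_iff.2 (measure_singleton z),
            compl_mem_ae_iff.2 (measure_singleton w)] with v hv hvw
          have a1 : z - w ≠ 0 := sub_ne_zero.2 (Ne.symm hw)
          have a2 : z - v ≠ 0 := sub_ne_zero.2 (Ne.symm hv)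
          have a3 : w - v ≠ 0 := sub_ne_zero.2 (Ne.symm hvw)
          have a4 : v - w ≠ 0 := sub_ne_zero.2 hvw
          rw [show v - w = -(w - v) by ring]
          field_simp
          ring
      _ = ∫ p : ℂ × ℂ, (f p.1 / (z - p.1) * (g p.2 / (p.1 - p.2)) +
            g p.2 / (z - p.2) * (f p.1 / (p.2 - p.1))) ∂(volume.prod volume) :=
          (integral_prod _ (h1.add h2)).symm
      _ = _ := by
          rw [integral_add h1 h2, integral_prod _ h1, integral_prod_symm _ h2]
          simp_rw [integral_const_mul]
  have e : ∀ a b : ℂ → ℂ, dbarInv (fun w => a w * dbarInv b w) z =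
      (Real.pi : ℂ)⁻¹ * (Real.pi : ℂ)⁻¹ * ∫ w, a w / (z - w) * ∫ v, b v / (w - v) := fun a b => by
    simp only [dbarInv]
    rw [mul_assoc, ← integral_const_mul, ← integral_const_mul, ← integral_const_mul]
    refine integral_congr_ae (Eventually.of_forall fun w => ?_)
    ring
  rw [e, e, ← mul_add, ← key, dbarInv, dbarInv]
  ring

theorem measurable_dbarInv (hf : CauchyBound f B) : Measurable (dbarInv f) :=
  _root_.measurable_dbarInv hf.1

theorem enorm_pow_le (hf : CauchyBound f B) (n : ℕ) (z : ℂ) : ‖dbarInv f z ^ n‖ₑ ≤ B ^ n := by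
  rw [enorm_pow]
  exact pow_le_pow_left' (hf.enorm_le z) n

theorem dbarInv_pow_succ (hf : CauchyBound f B) (hB : B ≠ ⊤) (n : ℕ) (z : ℂ) :
    dbarInv f z ^ (n + 1) = (n + 1) * dbarInv (fun w => f w * dbarInv f w ^ n) z := by
  induction n generalizing z with
  | zero => simp
  | succ n ih =>
    have hn : CauchyBound (fun w => f w * dbarInv f w ^ n) (B ^ n * B) :=
      hf.mul (hf.measurable_dbarInv.pow_const n) (hf.enorm_pow_le n)
    have h := hf.dbarInv_mul_dbarInv hn hB (by finiteness) z
    have hne : ((n : ℂ) + 1) ≠ 0 := by exact_mod_cast Nat.succ_ne_zero n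
    have e1 : (fun w => f w * dbarInv (fun w => f w * dbarInv f w ^ n) w) =
        fun w => f w * dbarInv f w ^ (n + 1) / (n + 1) := by
      ext w
      rw [ih w]
      field_simp
    have e2 : dbarInv (fun w => f w * dbarInv f w ^ (n + 1) / (n + 1)) z =
        dbarInv (fun w => f w * dbarInv f w ^ (n + 1)) z / (n + 1) := by
      simp only [dbarInv]
      rw [mul_div_assoc, ← integral_div]
      congr 2
      ext w
      ring
    have e3 : (fun w => f w * dbarInv f w ^ n * dbarInv f w) =
        fun w => f w * dbarInv f w ^ (n + 1) := by
      ext w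
      ring
    rw [e1, e2, e3] at h
    rw [pow_succ', ih z, mul_left_comm, h]
    push_cast
    field_simp
    ring

theorem enorm_exp_le {x : ℂ} (hB : B ≠ ⊤) (h : ‖x‖ₑ ≤ B) :
    ‖cexp x‖ₑ ≤ ENNReal.ofReal (Real.exp B.toReal) := by
  rw [← ofReal_norm]
  refine ENNReal.ofReal_le_ofReal ((Complex.norm_exp_le_exp_norm x).trans (Real.exp_le_exp.2 ?_))
  rw [← toReal_enorm]
  exact ENNReal.toReal_mono hB h

/-- The exponential of a Cauchy transform solves a linear integral equation. -/
theorem exp_neg_dbarInv (hf : CauchyBound f B) (hB : B ≠ ⊤) (z : ℂ) :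
    dbarInv (fun w => f w * cexp (-dbarInv f w)) z = 1 - cexp (-dbarInv f z) := by
  have hfm := hf.1
  have hPm := hf.measurable_dbarInv
  have hs1 : HasSum (fun n : ℕ => ∫ w, f w / (z - w) * ((-dbarInv f w) ^ n / n.factorial))
      (∫ w, f w / (z - w) * cexp (-dbarInv f w)) := by
    refine hasSum_integral_of_dominated_convergence
      (fun n w => ‖f w / (z - w)‖ * (B.toReal ^ n / n.factorial)) (fun n => ?_) (fun n => ?_) ?_ ?_ ?_
    · exact Measurable.aestronglyMeasurable (by fun_prop)
    · refine Eventually.of_forall fun w => ?_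
      rw [norm_mul, norm_div (_ ^ _), norm_pow, norm_neg, Complex.norm_natCast]
      gcongr
      rw [← toReal_enorm]
      exact ENNReal.toReal_mono hB (hf.enorm_le w)
    · exact Eventually.of_forall fun w => (Real.summable_pow_div_factorial _).mul_left _
    · simp_rw [tsum_mul_left]
      exact (hf.integrable hB z).norm.mul_const _
    · refine Eventually.of_forall fun w => HasSum.mul_left _ ?_
      rw [Complex.exp_eq_exp_ℂ]
      exact NormedSpace.expSeries_div_hasSum_exp _
  have hs2 : HasSum (fun n : ℕ => -((-dbarInv f z) ^ (n + 1) / (n + 1).factorial))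
      (1 - cexp (-dbarInv f z)) := by
    have h := NormedSpace.expSeries_div_hasSum_exp (-dbarInv f z)
    rw [← Complex.exp_eq_exp_ℂ, ← hasSum_nat_add_iff' 1] at h
    simpa using h.neg
  have heq : ∀ n : ℕ, (Real.pi : ℂ)⁻¹ *
      (∫ w, f w / (z - w) * ((-dbarInv f w) ^ n / n.factorial)) =
      -((-dbarInv f z) ^ (n + 1) / (n + 1).factorial) := by
    intro n
    have hne : ((n : ℂ) + 1) ≠ 0 := by exact_mod_cast Nat.succ_ne_zero n
    have hne' : ((n.factorial : ℕ) : ℂ) ≠ 0 := by exact_mod_cast n.factorial_ne_zero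
    have e : ∀ w, f w / (z - w) * ((-dbarInv f w) ^ n / n.factorial) =
        ((-1) ^ n / n.factorial) * (f w * dbarInv f w ^ n / (z - w)) := fun w => by
      rw [neg_pow (dbarInv f w)]
      ring
    simp_rw [e]
    rw [integral_const_mul, neg_pow (dbarInv f z), hf.dbarInv_pow_succ hB n z, Nat.factorial_succ]
    simp only [dbarInv]
    push_cast
    field_simp
    ring
  have := hs1.mul_left (Real.pi : ℂ)⁻¹
  simp_rw [heq] at this
  rw [hs2.unique this, dbarInv]
  congr 2
  ext w
  ring

end CauchyBound

/-- A Liouville type bound for the integral equation `x = ∂̄⁻¹[a conj x + f]`. -/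
theorem CauchyBound.enorm_le_of_eq {a f x : ℂ → ℂ} {A F M : ℝ≥0∞} (ha : CauchyBound a A)
    (hA : A ≠ ⊤) (hf : CauchyBound f F) (hF : F ≠ ⊤) (hx : Measurable x) (hM : M ≠ ⊤)
    (hxM : ∀ z, ‖x z‖ₑ ≤ M) (h : ∀ z, x z = dbarInv (fun w => a w * conj (x w) + f w) z) (z : ℂ) :
    ‖x z‖ₑ ≤ ENNReal.ofReal (Real.exp A.toReal) ^ 2 * ∫⁻ v, ‖f v‖ₑ * ‖z - v‖ₑ⁻¹ := by
  have hc : Measurable (fun z : ℂ => conj z) := continuous_conj.measurable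
  have ham := ha.1
  have hfm := hf.1
  set α : ℂ → ℂ := fun w => a w * (conj (x w) / x w) with hα
  have hαx : ∀ w, α w * x w = a w * conj (x w) := by
    intro w
    by_cases h0 : x w = 0
    · simp [hα, h0]
    · simp only [hα]
      field_simp
  have hαb : CauchyBound α A := by
    refine ha.mono (by simp only [hα]; fun_prop) fun v => ?_
    simp only [hα]
    rw [enorm_mul]
    refine mul_le_of_le_one_right (zero_le) ?_
    refine (enorm_div_le_mul_inv _ _).trans ?_
    rw [RCLike.enorm_conj]
    exact ENNReal.mul_inv_le_one _
  have hPm := hαb.measurable_dbarInv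
  set E : ℂ → ℂ := fun w => cexp (-dbarInv α w) with hE
  have hEm : Measurable E := by simp only [hE]; fun_prop
  set e : ℝ≥0∞ := ENNReal.ofReal (Real.exp A.toReal) with he
  have hEb : ∀ w, ‖E w‖ₑ ≤ e := fun w =>
    CauchyBound.enorm_exp_le hA (by rw [enorm_neg]; exact hαb.enorm_le w)
  have hE1 : ∀ w, dbarInv (fun w => α w * E w) w = 1 - E w := hαb.exp_neg_dbarInv hA
  have hetop : e ≠ ⊤ := ENNReal.ofReal_ne_top
  have hg : CauchyBound (fun w => α w * x w + f w) (M * A + F) := (hαb.mul hx hxM).add hf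
  have hαE : CauchyBound (fun w => α w * E w) (e * A) := hαb.mul hEm hEb
  have hx' : ∀ z, x z = dbarInv (fun w => α w * x w + f w) z := by
    intro z
    rw [h z]
    simp_rw [hαx]
  have hRB := hg.dbarInv_mul_dbarInv hαE (by finiteness) (by finiteness) z
  simp_rw [← hx', hE1] at hRB
  have hgE : CauchyBound (fun w => (α w * x w + f w) * E w) (e * (M * A + F)) := hg.mul hEm hEb
  have hαEx : CauchyBound (fun w => α w * E w * x w) (M * (e * A)) := hαE.mul hx hxM
  have h1 : dbarInv (fun w => (α w * x w + f w) * (1 - E w)) z =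
      x z - dbarInv (fun w => (α w * x w + f w) * E w) z := by
    rw [hx' z, ← hg.dbarInv_sub hgE (by finiteness) (by finiteness)]
    simp_rw [mul_sub, mul_one]
  have h2 : dbarInv (fun w => (α w * x w + f w) * E w) z =
      dbarInv (fun w => α w * E w * x w) z + dbarInv (fun w => f w * E w) z := by
    rw [← hαEx.dbarInv_add (hf.mul hEm hEb) (by finiteness) (by finiteness)]
    congr 1
    ext w
    ring
  have key : x z * E z = dbarInv (fun w => f w * E w) z := by
    rw [h1, h2] at hRB
    linear_combination -hRB
  have hxe : x z = dbarInv (fun w => f w * E w) z * cexp (dbarInv α z) := by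
    rw [← key, mul_assoc, ← Complex.exp_add]
    simp
  rw [hxe, enorm_mul, sq, mul_comm, mul_assoc]
  refine mul_le_mul' (CauchyBound.enorm_exp_le hA (hαb.enorm_le z)) ?_
  refine (enorm_dbarInv_le _ _).trans ?_
  rw [← lintegral_const_mul _ (by fun_prop)]
  refine lintegral_mono fun v => ?_
  rw [enorm_mul, mul_comm ‖f v‖ₑ, mul_assoc]
  exact mul_le_mul' (hEb v) le_rfl

/-- A weight whose Cauchy potential is bounded by `Λ`. -/
def PotBound (ρ : ℂ → ℝ≥0∞) (Λ : ℝ≥0∞) : Prop :=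
  Measurable ρ ∧ ∀ z, ∫⁻ v, ρ v * ‖z - v‖ₑ⁻¹ ≤ Λ

namespace PotBound

variable {ρ : ℂ → ℝ≥0∞} {Λ : ℝ≥0∞}

/-- Schur test. -/
theorem lintegral_sq_le (h : PotBound ρ Λ) {g : ℂ → ℝ≥0∞} (hg : Measurable g) :
    ∫⁻ z, ρ z * (∫⁻ v, ρ v * ‖z - v‖ₑ⁻¹ * g v) ^ 2 ≤ Λ ^ 2 * ∫⁻ v, ρ v * g v ^ 2 := by
  have hm := h.1
  calc _ ≤ ∫⁻ z, ρ z * (Λ * ∫⁻ v, ρ v * ‖z - v‖ₑ⁻¹ * g v ^ 2) := by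
        refine lintegral_mono fun z => mul_le_mul' le_rfl ?_
        refine (sq_lintegral_mul_le_weighted (by fun_prop) hg).trans ?_
        exact mul_le_mul' (h.2 z) le_rfl
    _ = Λ * ∫⁻ z, ∫⁻ v, ρ z * (ρ v * ‖z - v‖ₑ⁻¹ * g v ^ 2) := by
        rw [← lintegral_const_mul _ (by fun_prop)]
        refine lintegral_congr fun z => ?_
        rw [lintegral_const_mul _ (by fun_prop)]
        ring
    _ = Λ * ∫⁻ v, ∫⁻ z, ρ z * (ρ v * ‖z - v‖ₑ⁻¹ * g v ^ 2) := by
        rw [lintegral_lintegral_swap (by fun_prop)]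
    _ ≤ Λ * ∫⁻ v, Λ * (ρ v * g v ^ 2) := by
        refine mul_le_mul' le_rfl (lintegral_mono fun v => ?_)
        calc _ = ∫⁻ z, (ρ z * ‖v - z‖ₑ⁻¹) * (ρ v * g v ^ 2) := by
              refine lintegral_congr fun z => ?_
              rw [enorm_sub_rev]
              ring
          _ = (∫⁻ z, ρ z * ‖v - z‖ₑ⁻¹) * (ρ v * g v ^ 2) := lintegral_mul_const _ (by fun_prop)
          _ ≤ _ := mul_le_mul' (h.2 v) le_rfl
    _ = _ := by
        rw [lintegral_const_mul _ (by fun_prop)]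
        ring

theorem cauchyBound (h : PotBound ρ Λ) {a : ℂ → ℂ} (ha : Measurable a) (haρ : ∀ v, ‖a v‖ₑ ≤ ρ v) :
    CauchyBound a Λ :=
  ⟨ha, fun z => (lintegral_mono fun v => mul_le_mul' (haρ v) le_rfl).trans (h.2 z)⟩

theorem lintegral_dbarInv_sq_le (h : PotBound ρ Λ) {b g : ℂ → ℂ} (hb : ∀ v, ‖b v‖ₑ ≤ ρ v)
    (hg : Measurable g) :
    ∫⁻ z, ρ z * ‖dbarInv (fun w => b w * g w) z‖ₑ ^ 2 ≤ Λ ^ 2 * ∫⁻ z, ρ z * ‖g z‖ₑ ^ 2 := by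
  refine le_trans (lintegral_mono fun z => ?_) (h.lintegral_sq_le (g := fun z => ‖g z‖ₑ) (by fun_prop))
  gcongr
  refine (enorm_dbarInv_le _ _).trans (lintegral_mono fun v => ?_)
  rw [enorm_mul, mul_right_comm]
  exact mul_le_mul' (mul_le_mul' (hb v) le_rfl) le_rfl

/-- Weighted `L²` bound for the integral equation `n = y + ∂̄⁻¹[a conj n]`. -/
theorem lintegral_sq_le_of_eq (h : PotBound ρ Λ) (hΛ : Λ ≠ ⊤) {a n y : ℂ → ℂ} {M N : ℝ≥0∞}
    (ha : Measurable a) (haρ : ∀ v, ‖a v‖ₑ ≤ ρ v) (hn : Measurable n) (hM : M ≠ ⊤)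
    (hnM : ∀ z, ‖n z‖ₑ ≤ M) (hy : Measurable y) (hN : N ≠ ⊤) (hyN : ∀ z, ‖y z‖ₑ ≤ N)
    (heq : ∀ z, n z = y z + dbarInv (fun w => a w * conj (n w)) z) :
    ∫⁻ z, ρ z * ‖n z‖ₑ ^ 2 ≤ 2 * (1 + (ENNReal.ofReal (Real.exp Λ.toReal) ^ 2 * Λ) ^ 2) *
      ∫⁻ z, ρ z * ‖y z‖ₑ ^ 2 := by
  have hm := h.1
  have hc : Measurable (fun z : ℂ => conj z) := continuous_conj.measurable
  have haB := h.cauchyBound ha haρ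
  set e := ENNReal.ofReal (Real.exp Λ.toReal) ^ 2 with he
  have hf : CauchyBound (fun w => a w * conj (y w)) (N * Λ) :=
    haB.mul (by fun_prop) fun v => by rw [RCLike.enorm_conj]; exact hyN v
  have hx : ∀ z, ‖n z - y z‖ₑ ≤ e * ∫⁻ v, ρ v * ‖z - v‖ₑ⁻¹ * ‖y v‖ₑ := by
    intro z
    refine (haB.enorm_le_of_eq hΛ hf (by finiteness) (x := fun z => n z - y z) (M := M + N)
      (by fun_prop) (by finiteness) (fun z => ?_) (fun z => ?_) z).trans ?_
    · exact (enorm_sub_le).trans (add_le_add (hnM z) (hyN z))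
    · rw [heq z, add_sub_cancel_left]
      congr 1
      ext w
      rw [map_sub]
      ring
    · refine mul_le_mul' le_rfl (lintegral_mono fun v => ?_)
      rw [enorm_mul, RCLike.enorm_conj, mul_right_comm]
      exact mul_le_mul' (mul_le_mul' (haρ v) le_rfl) le_rfl
  calc _ ≤ ∫⁻ z, 2 * (ρ z * ‖y z‖ₑ ^ 2 +
        e ^ 2 * (ρ z * (∫⁻ v, ρ v * ‖z - v‖ₑ⁻¹ * ‖y v‖ₑ) ^ 2)) := by
        refine lintegral_mono fun z => ?_
        calc ρ z * ‖n z‖ₑ ^ 2 ≤ ρ z * (‖y z‖ₑ + ‖n z - y z‖ₑ) ^ 2 := by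
              gcongr
              simpa using enorm_add_le (y z) (n z - y z)
          _ ≤ ρ z * (2 * (‖y z‖ₑ ^ 2 + (e * ∫⁻ v, ρ v * ‖z - v‖ₑ⁻¹ * ‖y v‖ₑ) ^ 2)) := by
              refine mul_le_mul' le_rfl ((ENNReal.add_sq_le _ _).trans ?_)
              gcongr
              exact hx z
          _ = _ := by ring
    _ = 2 * ((∫⁻ z, ρ z * ‖y z‖ₑ ^ 2) +
        e ^ 2 * ∫⁻ z, ρ z * (∫⁻ v, ρ v * ‖z - v‖ₑ⁻¹ * ‖y v‖ₑ) ^ 2) := by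
        rw [lintegral_const_mul _ (by fun_prop), lintegral_add_left (by fun_prop),
          lintegral_const_mul _ (by fun_prop)]
    _ ≤ 2 * ((∫⁻ z, ρ z * ‖y z‖ₑ ^ 2) + e ^ 2 * (Λ ^ 2 * ∫⁻ z, ρ z * ‖y z‖ₑ ^ 2)) := by
        gcongr
        exact h.lintegral_sq_le (g := fun z => ‖y z‖ₑ) (by fun_prop)
    _ = _ := by ring

end PotBound

theorem CauchyBound.integral_mul_dzInv {f g : ℂ → ℂ} {B : ℝ≥0∞} (hg : CauchyBound g B)
    (hB : B ≠ ⊤) (hf : Integrable f) (hfm : Measurable f) :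
    ∫ z, f z * dzInv g z = -∫ z, dzInv f z * g z := by
  have hc : Measurable (fun z : ℂ => conj z) := continuous_conj.measurable
  have hgm := hg.1
  have hint : Integrable (fun p : ℂ × ℂ => f p.1 * (g p.2 / (conj p.1 - conj p.2)))
      (volume.prod volume) := by
    refine ⟨Measurable.aestronglyMeasurable (by fun_prop), ?_⟩
    refine lt_of_le_of_lt ?_ (ENNReal.mul_lt_top hf.2 hB.lt_top)
    rw [lintegral_prod _ (by fun_prop), ← lintegral_mul_const _ (by fun_prop)]
    refine lintegral_mono fun z => ?_
    simp only [enorm_mul]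
    rw [lintegral_const_mul _ (by fun_prop)]
    refine mul_le_mul' le_rfl (le_trans (lintegral_mono fun v => ?_) (hg.2 z))
    refine (enorm_div_le_mul_inv _ _).trans (le_of_eq ?_)
    rw [← map_sub, RCLike.enorm_conj]
  have h1 : ∫ z, f z * dzInv g z = (Real.pi : ℂ)⁻¹ * ∫ z, ∫ w, f z * (g w / (conj z - conj w)) := by
    rw [← integral_const_mul]
    refine integral_congr_ae (Eventually.of_forall fun z => ?_)
    simp only
    rw [integral_const_mul, dzInv]
    ring
  have h2 : ∫ z, dzInv f z * g z = (Real.pi : ℂ)⁻¹ * ∫ w, ∫ z, f z / (conj w - conj z) * g w := by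
    rw [← integral_const_mul]
    simp_rw [integral_mul_const, dzInv, mul_assoc]
  rw [h1, h2, integral_integral_swap hint, ← mul_neg, ← integral_neg]
  congr 1
  refine integral_congr_ae (Eventually.of_forall fun w => ?_)
  simp only
  rw [← integral_neg]
  refine integral_congr_ae (Eventually.of_forall fun z => ?_)
  simp only
  rw [← neg_sub (conj z) (conj w), div_neg]
  ring

theorem ENNReal.le_rpow_half_mul_of_sq_le {X C S : ℝ≥0∞} (h : X ^ 2 ≤ C * S ^ 2) :
    X ≤ C ^ (1 / 2 : ℝ) * S := by
  have e : ∀ Y : ℝ≥0∞, Y = (Y ^ 2) ^ (1 / 2 : ℝ) := fun Y => by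
    rw [← ENNReal.rpow_two, ← ENNReal.rpow_mul]
    norm_num
  conv_lhs => rw [e X]
  conv_rhs => rw [e S, ← ENNReal.mul_rpow_of_nonneg _ _ (by norm_num)]
  exact ENNReal.rpow_le_rpow h (by norm_num)

theorem eLpNorm_two_sq (f : ℂ → ℂ) : eLpNorm f 2 volume ^ 2 = ∫⁻ x, ‖f x‖ₑ ^ 2 := by
  rw [eLpNorm_eq_lintegral_rpow_enorm_toReal (by norm_num) (by norm_num), ← ENNReal.rpow_two,
    ← ENNReal.rpow_mul]
  norm_num

theorem enorm_ofReal_norm_rpow {s : ℝ} (hs : 0 ≤ s) (x : ℂ) :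
    ‖((‖x‖ ^ s : ℝ) : ℂ)‖ₑ = ‖x‖ₑ ^ s := by
  rw [← ofReal_norm, Complex.norm_of_nonneg (by positivity),
    ← ENNReal.ofReal_rpow_of_nonneg (norm_nonneg _) hs, ofReal_norm]

section HssNorm

variable {s : ℝ} (q : ℂ → ℂ)

theorem lintegral_enorm_sq_le_HssNorm (s : ℝ) : ∫⁻ v, ‖q v‖ₑ ^ 2 ≤ HssNorm s q ^ 2 := by
  rw [← eLpNorm_two_sq]
  gcongr
  exact le_max_left _ _

theorem lintegral_enorm_FT_sq_le_HssNorm (hs : 0 ≤ s) :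
    ∫⁻ ξ, (‖ξ‖ₑ ^ s * ‖FT q ξ‖ₑ) ^ 2 ≤ HssNorm s q ^ 2 := by
  simp_rw [← enorm_ofReal_norm_rpow hs, ← enorm_mul]
  rw [← eLpNorm_two_sq]
  gcongr
  exact (le_max_left _ _).trans (le_max_right _ _)

theorem lintegral_enorm_rpow_sq_le_HssNorm (hs : 0 ≤ s) :
    ∫⁻ z, (‖z‖ₑ ^ s * ‖q z‖ₑ) ^ 2 ≤ HssNorm s q ^ 2 := by
  simp_rw [← enorm_ofReal_norm_rpow hs, ← enorm_mul]
  rw [← eLpNorm_two_sq]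
  gcongr
  exact (le_max_right _ _).trans (le_max_right _ _)

end HssNorm

theorem lintegral_indicator_ball_enorm_rpow {a N : ℝ} (hN : 0 < N) :
    ∫⁻ ξ : ℂ, (Metric.ball 0 N).indicator (fun ξ => ‖ξ‖ₑ ^ a) ξ =
      ENNReal.ofReal N ^ (2 + a) * ∫⁻ ξ : ℂ in Metric.ball 0 1, ‖ξ‖ₑ ^ a := by
  have hm : Measurable ((Metric.ball (0 : ℂ) N).indicator (fun ξ : ℂ => ‖ξ‖ₑ ^ a)) :=
    Measurable.indicator (by fun_prop) Metric.isOpen_ball.measurableSet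
  have hsc := lintegral_comp_smul hm hN
  have hN' : ENNReal.ofReal N ≠ 0 := by simpa using hN
  have e : ∀ x : ℂ, (Metric.ball (0 : ℂ) N).indicator (fun ξ : ℂ => ‖ξ‖ₑ ^ a) (N • x) =
      ENNReal.ofReal N ^ a * (Metric.ball (0 : ℂ) 1).indicator (fun ξ : ℂ => ‖ξ‖ₑ ^ a) x := by
    intro x
    have hiff : N • x ∈ Metric.ball (0 : ℂ) N ↔ x ∈ Metric.ball (0 : ℂ) 1 := by
      rw [mem_ball_zero_iff, mem_ball_zero_iff, norm_smul, Real.norm_of_nonneg hN.le]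
      exact mul_lt_iff_lt_one_right hN
    by_cases hx : x ∈ Metric.ball (0 : ℂ) 1
    · rw [Set.indicator_of_mem hx, Set.indicator_of_mem (hiff.2 hx), enorm_smul,
        Real.enorm_of_nonneg hN.le, ENNReal.mul_rpow_of_ne_top (by simp) (by simp)]
    · rw [Set.indicator_of_notMem hx, Set.indicator_of_notMem (fun h => hx (hiff.1 h)), mul_zero]
  simp_rw [e] at hsc
  rw [lintegral_const_mul' _ _ (by finiteness),
    lintegral_indicator Metric.isOpen_ball.measurableSet] at hsc
  rw [ENNReal.rpow_add _ _ hN' (by simp), mul_assoc, hsc, ← mul_assoc, ENNReal.rpow_two,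
    ← ENNReal.ofReal_pow hN.le, ← ENNReal.ofReal_mul (by positivity),
    mul_inv_cancel₀ (by positivity), ENNReal.ofReal_one, one_mul]

/-- Morrey type estimate for functions with `s` derivatives in `L²`. -/
theorem exists_sq_lintegral_closedBall_le {s : ℝ} (hs : 0 < s) (hs1 : s < 1) :
    ∃ C : ℝ≥0∞, C ≠ ⊤ ∧ ∀ (q : 𝓢(ℂ, ℂ)) (z : ℂ) (r : ℝ), 0 < r →
      (∫⁻ v in Metric.closedBall z r, ‖q v‖ₑ) ^ 2 ≤
        C * (ENNReal.ofReal r ^ (2 + 2 * s) * HssNorm s q ^ 2) := by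
  set I : ℝ≥0∞ := ∫⁻ ξ : ℂ in Metric.ball 0 1, ‖ξ‖ₑ ^ (-2 * s) with hI
  have hItop : I ≠ ⊤ := (lintegral_ball_enorm_rpow_lt_top (by linarith)).ne
  set p : ℝ≥0∞ := ENNReal.ofReal Real.pi with hp
  refine ⟨2 * p * (p * I + 1), by finiteness, fun q z r hr => ?_⟩
  set S := HssNorm s q with hS
  set ro := ENNReal.ofReal r with hro
  have hr0 : ro ≠ 0 := by simpa [hro] using hr
  have hrt : ro ≠ ⊤ := ENNReal.ofReal_ne_top
  set B : Set ℂ := Metric.ball 0 r⁻¹ with hB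
  have hBm : MeasurableSet B := Metric.isOpen_ball.measurableSet
  have hvol : volume (Metric.closedBall z r) = p * ro ^ (2 : ℝ) := by
    rw [Complex.volume_closedBall, mul_comm, hp, ENNReal.rpow_two]
    congr 1
    rw [← NNReal.coe_real_pi, ENNReal.ofReal_coe_nnreal]
  have hFm := measurable_FT q
  have hFi := integrable_FT q
  have hLi : Integrable (B.indicator (FT q)) := hFi.indicator hBm
  have hHi : Integrable (Bᶜ.indicator (FT q)) := hFi.indicator hBm.compl
  set qL := FTinv (B.indicator (FT q)) with hqL
  set qH := FTinv (Bᶜ.indicator (FT q)) with hqH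
  have hosc : ∀ x ξ : ℂ,
      ‖cexp ((2 * Real.pi * Complex.I) * ((x.re * ξ.re + x.im * ξ.im : ℝ) : ℂ))‖ = 1 := by
    intro x ξ
    rw [show (2 * Real.pi * Complex.I) * ((x.re * ξ.re + x.im * ξ.im : ℝ) : ℂ) =
      ((2 * Real.pi * (x.re * ξ.re + x.im * ξ.im) : ℝ) : ℂ) * Complex.I by push_cast; ring]
    exact norm_exp_ofReal_mul_I _
  have hsplit : ∀ x, q x = qL x + qH x := by
    intro x
    rw [← FTinv_FT q x, hqL, hqH, FTinv, FTinv, FTinv, ← integral_add]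
    · refine integral_congr_ae (Eventually.of_forall fun ξ => ?_)
      simp only
      rw [← mul_add, ← Pi.add_apply, Set.indicator_self_add_compl]
    · refine hLi.bdd_mul (c := 1) (Continuous.aestronglyMeasurable (by fun_prop))
        (Eventually.of_forall fun ξ => (hosc x ξ).le)
    · refine hHi.bdd_mul (c := 1) (Continuous.aestronglyMeasurable (by fun_prop))
        (Eventually.of_forall fun ξ => (hosc x ξ).le)
  have hL : ∀ x, ‖qL x‖ₑ ^ 2 ≤ ro ^ (-2 + 2 * s) * I * S ^ 2 := by
    intro x
    have h1 : ‖qL x‖ₑ ≤ ∫⁻ ξ, B.indicator (fun ξ => ‖ξ‖ₑ ^ (-s)) ξ * (‖ξ‖ₑ ^ s * ‖FT q ξ‖ₑ) := by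
      rw [hqL, FTinv]
      refine (enorm_integral_le_lintegral_enorm _).trans (lintegral_mono_ae ?_)
      filter_upwards [compl_mem_ae_iff.2 (measure_singleton (0 : ℂ))] with ξ hξ
      rw [enorm_mul, ← ofReal_norm (cexp _), hosc, ENNReal.ofReal_one, one_mul]
      by_cases h : ξ ∈ B
      · rw [Set.indicator_of_mem h, Set.indicator_of_mem h, ← mul_assoc,
          ← ENNReal.rpow_add _ _ (by simpa using hξ) (by simp)]
        simp
      · simp [h]
    calc _ ≤ _ := pow_le_pow_left' h1 2
      _ ≤ _ := sq_lintegral_mul_le (by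
          refine (Measurable.indicator ?_ hBm).aemeasurable; fun_prop) (by fun_prop)
      _ ≤ (ro ^ (-2 + 2 * s) * I) * S ^ 2 := by
          refine mul_le_mul' (le_of_eq ?_) (lintegral_enorm_FT_sq_le_HssNorm q hs.le)
          have e : ∀ ξ : ℂ, B.indicator (fun ξ => ‖ξ‖ₑ ^ (-s)) ξ ^ 2 =
              B.indicator (fun ξ => ‖ξ‖ₑ ^ (-2 * s)) ξ := by
            intro ξ
            by_cases h : ξ ∈ B
            · rw [Set.indicator_of_mem h, Set.indicator_of_mem h, ← ENNReal.rpow_two,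
                ← ENNReal.rpow_mul]
              congr 1
              ring
            · simp [h]
          simp_rw [e]
          rw [lintegral_indicator_ball_enorm_rpow (by positivity), ENNReal.ofReal_inv_of_pos hr,
            ENNReal.inv_rpow, ← ENNReal.rpow_neg]
          congr 2
          ring
  have hH : ∫⁻ x, ‖qH x‖ₑ ^ 2 ≤ ro ^ (2 * s) * S ^ 2 := by
    refine (lintegral_enorm_FTinv_sq_le hHi).trans ?_
    refine le_trans ?_ (mul_le_mul' le_rfl (lintegral_enorm_FT_sq_le_HssNorm q hs.le))
    rw [← lintegral_const_mul _ (by fun_prop)]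
    refine lintegral_mono fun ξ => ?_
    by_cases h : ξ ∈ B
    · simp [h]
    · rw [Set.indicator_of_mem (Set.mem_compl h), mul_pow, ← mul_assoc]
      refine le_mul_of_one_le_left (zero_le) ?_
      rw [← ENNReal.rpow_two, ← ENNReal.rpow_mul, mul_comm s 2,
        ← ENNReal.mul_rpow_of_nonneg _ _ (by positivity)]
      refine ENNReal.one_le_rpow ?_ (by positivity)
      rw [hro, ← ofReal_norm, ← ENNReal.ofReal_mul hr.le, ENNReal.one_le_ofReal]
      have : r⁻¹ ≤ ‖ξ‖ := by simpa [hB] using h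
      calc (1 : ℝ) = r * r⁻¹ := by field_simp
        _ ≤ _ := by gcongr
  have hqm : Measurable q := q.continuous.measurable
  calc (∫⁻ v in Metric.closedBall z r, ‖q v‖ₑ) ^ 2
      = (∫⁻ v in Metric.closedBall z r, 1 * ‖q v‖ₑ) ^ 2 := by simp
    _ ≤ (∫⁻ v in Metric.closedBall z r, 1 ^ 2) * ∫⁻ v in Metric.closedBall z r, ‖q v‖ₑ ^ 2 :=
        sq_lintegral_mul_le (by fun_prop) (by fun_prop)
    _ ≤ p * ro ^ (2 : ℝ) * ∫⁻ v in Metric.closedBall z r,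
          (2 * (ro ^ (-2 + 2 * s) * I * S ^ 2) + 2 * ‖qH v‖ₑ ^ 2) := by
        refine mul_le_mul' (by simp [hvol]) (lintegral_mono fun v => ?_)
        rw [hsplit v]
        calc _ ≤ (‖qL v‖ₑ + ‖qH v‖ₑ) ^ 2 := by gcongr; exact enorm_add_le _ _
          _ ≤ 2 * (‖qL v‖ₑ ^ 2 + ‖qH v‖ₑ ^ 2) := ENNReal.add_sq_le _ _
          _ ≤ _ := by
              rw [mul_add]
              gcongr
              exact hL v
    _ ≤ p * ro ^ (2 : ℝ) * (2 * (ro ^ (-2 + 2 * s) * I * S ^ 2) * (p * ro ^ (2 : ℝ)) +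
          2 * (ro ^ (2 * s) * S ^ 2)) := by
        refine mul_le_mul' le_rfl ?_
        rw [lintegral_add_left (by fun_prop), setLIntegral_const, hvol,
          lintegral_const_mul' _ _ (by simp)]
        gcongr
        exact (setLIntegral_le_lintegral _ _).trans hH
    _ = 2 * p * (p * (ro ^ (-2 + 2 * s) * ro ^ (2 : ℝ)) * I + ro ^ (2 * s)) *
          (ro ^ (2 : ℝ)  * S ^ 2) := by ring
    _ = _ := by
        rw [← ENNReal.rpow_add _ _ hr0 hrt, ENNReal.rpow_add 2 _ hr0 hrt,
          show -2 + 2 * s + 2 = 2 * s by ring]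
        ring

theorem enorm_rpow_le_tsum_indicator {a : ℝ} (ha : a ≤ 0) {x : ℂ} (hx0 : x ≠ 0) (hx : ‖x‖ ≤ 1) :
    ‖x‖ₑ ^ a ≤ ∑' j : ℕ, (Metric.closedBall (0 : ℂ) ((1 / 2) ^ j)).indicator
      (fun _ => ((2⁻¹ : ℝ≥0∞) ^ (j + 1)) ^ a) x := by
  obtain ⟨n, hn1, hn2⟩ := exists_nat_pow_near_of_lt_one (norm_pos_iff.2 hx0) hx
    (y := (1 / 2 : ℝ)) (by norm_num) (by norm_num)
  refine le_trans ?_ (ENNReal.le_tsum n)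
  rw [Set.indicator_of_mem (by simpa using hn2)]
  refine ENNReal.rpow_le_rpow_of_nonpos ?_ ha
  rw [← ofReal_norm]
  refine le_trans (le_of_eq ?_) (ENNReal.ofReal_le_ofReal hn1.le)
  rw [ENNReal.ofReal_pow (by norm_num), one_div, ENNReal.ofReal_inv_of_pos (by norm_num)]
  simp

theorem exists_lintegral_near_le {s : ℝ} (hs : 0 < s) (hs1 : s < 1) :
    ∃ C : ℝ≥0∞, C ≠ ⊤ ∧ ∀ (q : 𝓢(ℂ, ℂ)) (z : ℂ),
      ∫⁻ v in Metric.closedBall z 1, ‖q v‖ₑ * ‖z - v‖ₑ ^ (-1 - s / 2) ≤ C * HssNorm s q := by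
  obtain ⟨C, hC, hCb⟩ := exists_sq_lintegral_closedBall_le hs hs1
  set η : ℝ≥0∞ := 2⁻¹ with hη
  have hη0 : η ≠ 0 := by simp [hη]
  have hηt : η ≠ ⊤ := by simp [hη]
  have hη1 : η ^ (s / 2) < 1 := ENNReal.rpow_lt_one (by simp [hη]) (by linarith)
  refine ⟨C ^ (1 / 2 : ℝ) * (η ^ (-1 - s / 2) * (1 - η ^ (s / 2))⁻¹), ?_, fun q z => ?_⟩
  · have : (1 - η ^ (s / 2))⁻¹ ≠ ⊤ := by
      rw [ENNReal.inv_ne_top]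
      exact (tsub_pos_of_lt hη1).ne'
    exact ENNReal.mul_ne_top (by finiteness) (ENNReal.mul_ne_top (by finiteness) this)
  have hqm : Measurable q := q.continuous.measurable
  set S := HssNorm s q with hS
  have hball : ∀ j : ℕ, ∫⁻ v in Metric.closedBall z ((1 / 2) ^ j), ‖q v‖ₑ ≤
      C ^ (1 / 2 : ℝ) * ((η ^ j) ^ (1 + s) * S) := by
    intro j
    refine ENNReal.le_rpow_half_mul_of_sq_le ((hCb q z _ (by positivity)).trans (le_of_eq ?_))
    rw [mul_pow, ← ENNReal.rpow_two ((η ^ j) ^ (1 + s)), ← ENNReal.rpow_mul,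
      ENNReal.ofReal_pow (by norm_num), one_div, ENNReal.ofReal_inv_of_pos (by norm_num),
      show (1 + s) * 2 = 2 + 2 * s by ring]
    simp [hη, hS]
  calc ∫⁻ v in Metric.closedBall z 1, ‖q v‖ₑ * ‖z - v‖ₑ ^ (-1 - s / 2)
      ≤ ∫⁻ v in Metric.closedBall z 1, ∑' j : ℕ, ‖q v‖ₑ *
          (Metric.closedBall z ((1 / 2) ^ j)).indicator
            (fun _ => (η ^ (j + 1)) ^ (-1 - s / 2)) v := by
        refine lintegral_mono_ae ?_
        filter_upwards [ae_restrict_mem Metric.isClosed_closedBall.measurableSet,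
          ae_restrict_of_ae (compl_mem_ae_iff.2 (measure_singleton z))] with v hv hvz
        rw [ENNReal.tsum_mul_left]
        refine mul_le_mul' le_rfl ?_
        refine (enorm_rpow_le_tsum_indicator (by linarith) (sub_ne_zero.2 (Ne.symm hvz)) ?_).trans
          (le_of_eq ?_)
        · rw [← dist_eq_norm, dist_comm]; exact hv
        · congr 1
          ext j
          have : z - v ∈ Metric.closedBall (0 : ℂ) ((1 / 2) ^ j) ↔
              v ∈ Metric.closedBall z ((1 / 2) ^ j) := by
            rw [mem_closedBall_zero_iff, Metric.mem_closedBall, dist_comm, dist_eq_norm]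
          by_cases h : v ∈ Metric.closedBall z ((1 / 2) ^ j)
          · rw [Set.indicator_of_mem h, Set.indicator_of_mem (this.2 h)]
          · rw [Set.indicator_of_notMem h, Set.indicator_of_notMem (fun h' => h (this.1 h'))]
    _ ≤ ∫⁻ v, ∑' j : ℕ, ‖q v‖ₑ * (Metric.closedBall z ((1 / 2) ^ j)).indicator
            (fun _ => (η ^ (j + 1)) ^ (-1 - s / 2)) v := setLIntegral_le_lintegral _ _
    _ = ∑' j : ℕ, ∫⁻ v, ‖q v‖ₑ * (Metric.closedBall z ((1 / 2) ^ j)).indicator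
            (fun _ => (η ^ (j + 1)) ^ (-1 - s / 2)) v := by
        refine lintegral_tsum fun j => ?_
        have : Measurable ((Metric.closedBall z ((1 / 2) ^ j)).indicator
            (fun _ : ℂ => (η ^ (j + 1)) ^ (-1 - s / 2))) :=
          measurable_const.indicator Metric.isClosed_closedBall.measurableSet
        fun_prop
    _ = ∑' j : ℕ, (η ^ (j + 1)) ^ (-1 - s / 2) *
          ∫⁻ v in Metric.closedBall z ((1 / 2) ^ j), ‖q v‖ₑ := by
        congr 1
        ext j
        rw [← lintegral_indicator Metric.isClosed_closedBall.measurableSet,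
          ← lintegral_const_mul _
            (Measurable.indicator (by fun_prop) Metric.isClosed_closedBall.measurableSet)]
        refine lintegral_congr fun v => ?_
        by_cases h : v ∈ Metric.closedBall z ((1 / 2) ^ j)
        · rw [Set.indicator_of_mem h, Set.indicator_of_mem h, mul_comm]
        · rw [Set.indicator_of_notMem h, Set.indicator_of_notMem h, mul_zero, mul_zero]
    _ ≤ ∑' j : ℕ, (η ^ (j + 1)) ^ (-1 - s / 2) * (C ^ (1 / 2 : ℝ) * ((η ^ j) ^ (1 + s) * S)) :=
        ENNReal.tsum_le_tsum fun j => mul_le_mul' le_rfl (hball j)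
    _ = ∑' j : ℕ, C ^ (1 / 2 : ℝ) * (η ^ (-1 - s / 2)) * S * (η ^ (s / 2)) ^ j := by
        congr 1
        ext j
        have : (η ^ (j + 1)) ^ (-1 - s / 2) * (η ^ j) ^ (1 + s) =
            η ^ (-1 - s / 2) * (η ^ (s / 2)) ^ j := by
          simp_rw [← ENNReal.rpow_natCast, ← ENNReal.rpow_mul]
          rw [← ENNReal.rpow_add _ _ hη0 hηt, ← ENNReal.rpow_add _ _ hη0 hηt]
          congr 1
          push_cast
          ring
        calc _ = C ^ (1 / 2 : ℝ) * S * ((η ^ (j + 1)) ^ (-1 - s / 2) * (η ^ j) ^ (1 + s)) := by ring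
          _ = _ := by rw [this]; ring
    _ = _ := by
        rw [ENNReal.tsum_mul_left, ENNReal.tsum_geometric]
        ring

theorem exists_lintegral_far_le {s : ℝ} (hs : 0 < s) (hs1 : s < 1) :
    ∃ C : ℝ≥0∞, C ≠ ⊤ ∧ ∀ (q : 𝓢(ℂ, ℂ)) (z : ℂ),
      ∫⁻ v in (Metric.closedBall z 1)ᶜ, ‖q v‖ₑ * ‖z - v‖ₑ ^ (-1 + s / 2) ≤ C * HssNorm s q := by
  set J₁ : ℝ≥0∞ := ∫⁻ x : ℂ in (Metric.ball 0 1)ᶜ, ‖x‖ₑ ^ (-2 - s) with hJ₁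
  set J₂ : ℝ≥0∞ := ∫⁻ x : ℂ, (1 + ‖x‖ₑ) ^ (-2 - s) with hJ₂
  have hJ₁t : J₁ ≠ ⊤ := (lintegral_compl_ball_enorm_rpow_lt_top (by linarith)).ne
  have hJ₂t : J₂ ≠ ⊤ := (lintegral_one_add_enorm_rpow_lt_top (by linarith)).ne
  refine ⟨((J₁ + J₂) * 4) ^ (1 / 2 : ℝ), by finiteness, fun q z => ?_⟩
  have hqm : Measurable q := q.continuous.measurable
  refine ENNReal.le_rpow_half_mul_of_sq_le ?_
  set S := HssNorm s q with hS
  set A : Set ℂ := (Metric.closedBall z 1)ᶜ with hA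
  have hAm : MeasurableSet A := Metric.isClosed_closedBall.measurableSet.compl
  calc (∫⁻ v in A, ‖q v‖ₑ * ‖z - v‖ₑ ^ (-1 + s / 2)) ^ 2
      = (∫⁻ v in A, (‖z - v‖ₑ ^ (-1 + s / 2) * (1 + ‖v‖ₑ) ^ (-s)) *
          ((1 + ‖v‖ₑ) ^ s * ‖q v‖ₑ)) ^ 2 := by
        congr 1
        refine lintegral_congr fun v => ?_
        have : (1 + ‖v‖ₑ) ^ (-s) * (1 + ‖v‖ₑ) ^ s = 1 := by
          rw [← ENNReal.rpow_add _ _ (by simp) (by simp)]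
          simp
        symm
        calc _ = ‖z - v‖ₑ ^ (-1 + s / 2) * ‖q v‖ₑ * ((1 + ‖v‖ₑ) ^ (-s) * (1 + ‖v‖ₑ) ^ s) := by ring
          _ = _ := by rw [this]; ring
    _ ≤ (∫⁻ v in A, (‖z - v‖ₑ ^ (-1 + s / 2) * (1 + ‖v‖ₑ) ^ (-s)) ^ 2) *
          ∫⁻ v in A, ((1 + ‖v‖ₑ) ^ s * ‖q v‖ₑ) ^ 2 :=
        sq_lintegral_mul_le (by fun_prop) (by fun_prop)
    _ ≤ (J₁ + J₂) * (4 * S ^ 2) := by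
        refine mul_le_mul' ?_ ?_
        · calc _ ≤ ∫⁻ v in A, (‖z - v‖ₑ ^ (-2 - s) + (1 + ‖v‖ₑ) ^ (-2 - s)) := by
                refine lintegral_mono fun v => ?_
                rw [mul_pow, ← ENNReal.rpow_two, ← ENNReal.rpow_two, ← ENNReal.rpow_mul,
                  ← ENNReal.rpow_mul]
                exact ENNReal.rpow_mul_rpow_le_add (by simp) (by simp) (by linarith) (by linarith)
                  (by linarith) (by ring)
            _ = (∫⁻ v in A, ‖z - v‖ₑ ^ (-2 - s)) + ∫⁻ v in A, (1 + ‖v‖ₑ) ^ (-2 - s) :=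
                lintegral_add_left (by fun_prop) _
            _ ≤ J₁ + J₂ := by
                refine add_le_add ?_ (setLIntegral_le_lintegral _ _)
                have hBm : MeasurableSet (Metric.ball (0 : ℂ) 1)ᶜ :=
                  Metric.isOpen_ball.measurableSet.compl
                rw [hJ₁, ← lintegral_indicator hAm, ← lintegral_indicator hBm,
                  ← lintegral_sub_left_eq_self
                    ((Metric.ball (0 : ℂ) 1)ᶜ.indicator fun x => ‖x‖ₑ ^ (-2 - s)) z]
                refine lintegral_mono fun v => ?_
                by_cases h : v ∈ A
                · have h' : z - v ∈ (Metric.ball (0 : ℂ) 1)ᶜ := by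
                    have : 1 < dist v z := by simpa [hA] using h
                    rw [dist_comm, dist_eq_norm] at this
                    simpa using this.le
                  rw [Set.indicator_of_mem h, Set.indicator_of_mem h']
                · rw [Set.indicator_of_notMem h]
                  exact zero_le
        · refine (setLIntegral_le_lintegral _ _).trans ?_
          calc _ ≤ ∫⁻ v, (2 * ‖q v‖ₑ ^ 2 + 2 * (‖v‖ₑ ^ s * ‖q v‖ₑ) ^ 2) := by
                refine lintegral_mono fun v => ?_
                have h1 : (1 + ‖v‖ₑ) ^ s ≤ 1 + ‖v‖ₑ ^ s := by
                  have := ENNReal.rpow_add_le_add_rpow 1 ‖v‖ₑ hs.le hs1.le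
                  simpa using this
                calc ((1 + ‖v‖ₑ) ^ s * ‖q v‖ₑ) ^ 2 ≤ ((1 + ‖v‖ₑ ^ s) * ‖q v‖ₑ) ^ 2 := by
                      exact pow_le_pow_left' (mul_le_mul' h1 le_rfl) 2
                  _ = (‖q v‖ₑ + ‖v‖ₑ ^ s * ‖q v‖ₑ) ^ 2 := by ring
                  _ ≤ _ := by
                      refine (ENNReal.add_sq_le _ _).trans (le_of_eq ?_)
                      ring
            _ = 2 * (∫⁻ v, ‖q v‖ₑ ^ 2) + 2 * ∫⁻ v, (‖v‖ₑ ^ s * ‖q v‖ₑ) ^ 2 := by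
                rw [lintegral_add_left (by fun_prop), lintegral_const_mul _ (by fun_prop),
                  lintegral_const_mul _ (by fun_prop)]
            _ ≤ 2 * S ^ 2 + 2 * S ^ 2 := by
                gcongr
                · exact lintegral_enorm_sq_le_HssNorm _ _
                · exact lintegral_enorm_rpow_sq_le_HssNorm _ hs.le
            _ = _ := by ring
    _ = _ := by ring

theorem exists_katoBound {s : ℝ} (hs : 0 < s) (hs1 : s < 1) :
    ∃ C : ℝ≥0∞, C ≠ ⊤ ∧ ∀ q : 𝓢(ℂ, ℂ), KatoBound (s / 2) (fun v => ‖q v‖ₑ) (C * HssNorm s q) := by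
  obtain ⟨C₁, hC₁, h₁⟩ := exists_lintegral_near_le hs hs1
  obtain ⟨C₂, hC₂, h₂⟩ := exists_lintegral_far_le hs hs1
  refine ⟨2 * C₁ + 2 * C₂, by finiteness, fun q => ?_⟩
  have hqm : Measurable q := q.continuous.measurable
  refine ⟨by fun_prop, fun z => ?_⟩
  have hm : MeasurableSet (Metric.closedBall z (1 : ℝ)) := Metric.isClosed_closedBall.measurableSet
  rw [← lintegral_add_compl _ hm, add_mul, mul_assoc, mul_assoc]
  refine add_le_add ?_ ?_
  · refine le_trans ?_ (mul_le_mul' le_rfl (h₁ q z))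
    rw [← lintegral_const_mul _ (by fun_prop)]
    refine setLIntegral_mono (by fun_prop) fun v hv => ?_
    rw [mul_left_comm, two_mul]
    refine mul_le_mul' le_rfl (add_le_add le_rfl ?_)
    refine ENNReal.rpow_le_rpow_of_exponent_ge ?_ (by linarith)
    rw [← edist_eq_enorm_sub, edist_dist, dist_comm, ENNReal.ofReal_le_one]
    exact hv
  · refine le_trans ?_ (mul_le_mul' le_rfl (h₂ q z))
    rw [← lintegral_const_mul _ (by fun_prop)]
    refine setLIntegral_mono (by fun_prop) fun v hv => ?_
    rw [mul_left_comm, two_mul]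
    refine mul_le_mul' le_rfl (add_le_add ?_ le_rfl)
    refine ENNReal.rpow_le_rpow_of_exponent_le ?_ (by linarith)
    rw [← edist_eq_enorm_sub, edist_dist, dist_comm, ENNReal.one_le_ofReal]
    have : 1 < dist v z := by simpa using hv
    exact this.le

/-- The squared `L²` norm of `f` with weight `ρ`. -/
noncomputable def wsq (ρ : ℂ → ℝ≥0∞) (f : ℂ → ℂ) : ℝ≥0∞ := ∫⁻ z, ρ z * ‖f z‖ₑ ^ 2

theorem dbarInv_const_mul (c : ℂ) (h : ℂ → ℂ) (z : ℂ) :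
    dbarInv (fun w => c * h w) z = c * dbarInv h z := by
  simp_rw [dbarInv, mul_div_assoc]
  rw [integral_const_mul]
  ring

theorem wsq_add_le {ρ : ℂ → ℝ≥0∞} {f g : ℂ → ℂ} (hρ : Measurable ρ) (hf : Measurable f) :
    wsq ρ (fun z => f z + g z) ≤ 2 * (wsq ρ f + wsq ρ g) := by
  rw [wsq, wsq, wsq, ← lintegral_add_left (by fun_prop), ← lintegral_const_mul' _ _ (by simp)]
  refine lintegral_mono fun z => ?_
  calc ρ z * ‖f z + g z‖ₑ ^ 2 ≤ ρ z * (2 * (‖f z‖ₑ ^ 2 + ‖g z‖ₑ ^ 2)) := by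
        gcongr
        exact (pow_le_pow_left' (enorm_add_le _ _) 2).trans (ENNReal.add_sq_le _ _)
    _ = _ := by ring

theorem wsq_mono {ρ : ℂ → ℝ≥0∞} {f g : ℂ → ℂ} (h : ∀ z, ‖f z‖ₑ ≤ ‖g z‖ₑ) :
    wsq ρ f ≤ wsq ρ g := by
  refine lintegral_mono fun z => ?_
  have := h z
  gcongr

theorem enorm_eq_one_of_sign {σ : ℂ} (hσ : σ = 1 ∨ σ = -1) : ‖σ‖ₑ = 1 := by
  rcases hσ with rfl | rfl <;> simp

/-- Measurable solutions, bounded by `M`, of the scattering equations with potential `a`. -/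
structure ScatPair (a u V : ℂ → ℂ) (M : ℝ≥0∞) : Prop where
  measurable_fst : Measurable u
  measurable_snd : Measurable V
  fst_le : ∀ z, ‖u z‖ₑ ≤ M
  snd_le : ∀ z, ‖V z‖ₑ ≤ M
  fst_eq : ∀ z, u z = 1 + dbarInv (fun w => a w * conj (V w)) z
  snd_eq : ∀ z, V z = dbarInv (fun w => a w * conj (u w)) z

/-- The combination `(u - 1) + σ V`, which for `σ = ±1` solves a scalar equation. -/
def scatComb (u V : ℂ → ℂ) (σ : ℂ) (z : ℂ) : ℂ := (u z - 1) + σ * V z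

namespace ScatPair

variable {a u V : ℂ → ℂ} {M A : ℝ≥0∞} {σ : ℂ}

theorem measurable_scatComb (h : ScatPair a u V M) (σ : ℂ) : Measurable (scatComb u V σ) := by
  have h1 := h.measurable_fst
  have h2 := h.measurable_snd
  unfold scatComb
  fun_prop

theorem enorm_scatComb_le (h : ScatPair a u V M) (hσ : σ = 1 ∨ σ = -1) (z : ℂ) :
    ‖scatComb u V σ z‖ₑ ≤ (M + 1) + M := by
  refine (enorm_add_le _ _).trans (add_le_add (enorm_sub_le.trans ?_) ?_)
  · rw [enorm_one]
    exact add_le_add (h.fst_le z) le_rfl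
  · rw [enorm_mul, enorm_eq_one_of_sign hσ, one_mul]
    exact h.snd_le z

theorem scatComb_eq (h : ScatPair a u V M) (hM : M ≠ ⊤) (ha : CauchyBound a A) (hA : A ≠ ⊤)
    (hσ : σ = 1 ∨ σ = -1) (z : ℂ) : scatComb u V σ z = σ * dbarInv a z +
      dbarInv (fun w => (σ * a w) * conj (scatComb u V σ w)) z := by
  have hc : Measurable (fun z : ℂ => conj z) := continuous_conj.measurable
  have h1 := h.measurable_fst
  have h2 := h.measurable_snd
  have hu : CauchyBound (fun w => a w * conj (u w)) (M * A) :=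
    ha.mul (by fun_prop) fun v => by rw [RCLike.enorm_conj]; exact h.fst_le v
  have hV : CauchyBound (fun w => a w * conj (V w)) (M * A) :=
    ha.mul (by fun_prop) fun v => by rw [RCLike.enorm_conj]; exact h.snd_le v
  have hMA : M * A ≠ ⊤ := by finiteness
  have ham := ha.1
  have hua : CauchyBound (fun w => a w * conj (u w) - a w) (M * A + A) := by
    simpa only [sub_eq_add_neg] using
      hu.add (ha.mono (g := fun v => -a v) (by fun_prop) fun v => (enorm_neg (a v)).le)
  have hσua : CauchyBound (fun w => σ * (a w * conj (u w) - a w)) (M * A + A) :=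
    hua.mono (by fun_prop) fun v => by rw [enorm_mul, enorm_eq_one_of_sign hσ, one_mul]
  have key : (fun w => (σ * a w) * conj (scatComb u V σ w)) =
      fun w => σ * (a w * conj (u w) - a w) + a w * conj (V w) := by
    ext w
    rcases hσ with rfl | rfl <;> simp [scatComb] <;> ring
  rw [key, hσua.dbarInv_add hV (by finiteness) hMA, dbarInv_const_mul,
    hu.dbarInv_sub ha hMA hA, ← h.snd_eq, scatComb]
  linear_combination h.fst_eq z

end ScatPair

namespace PotBound

variable {ρ : ℂ → ℝ≥0∞} {Λ : ℝ≥0∞}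

theorem wsq_scatComb_le (h : PotBound ρ Λ) (hΛ : Λ ≠ ⊤) {a u V : ℂ → ℂ} {M : ℝ≥0∞} {σ : ℂ}
    (ha : Measurable a) (haρ : ∀ v, ‖a v‖ₑ ≤ ρ v) (hs : ScatPair a u V M) (hM : M ≠ ⊤)
    (hσ : σ = 1 ∨ σ = -1) :
    wsq ρ (scatComb u V σ) ≤ 2 * (1 + (ENNReal.ofReal (Real.exp Λ.toReal) ^ 2 * Λ) ^ 2) *
      wsq ρ (dbarInv a) := by
  have hab := h.cauchyBound ha haρ
  have hP := hab.measurable_dbarInv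
  have hσ1 := enorm_eq_one_of_sign hσ
  refine (h.lintegral_sq_le_of_eq hΛ (a := fun w => σ * a w) (y := fun z => σ * dbarInv a z)
    (N := Λ) (by fun_prop) (fun v => ?_) (hs.measurable_scatComb σ) (by finiteness)
    (hs.enorm_scatComb_le hσ) (by fun_prop) hΛ (fun z => ?_)
    (hs.scatComb_eq hM hab hΛ hσ)).trans (mul_le_mul' le_rfl (wsq_mono fun z => ?_))
  · rw [enorm_mul, hσ1, one_mul]
    exact haρ v
  · rw [enorm_mul, hσ1, one_mul]
    exact hab.enorm_le z
  · rw [enorm_mul, hσ1, one_mul]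

theorem wsq_scatComb_sub_le (h : PotBound ρ Λ) (hΛ : Λ ≠ ⊤) {a₁ a₂ δ u₁ V₁ u₂ V₂ : ℂ → ℂ}
    {M : ℝ≥0∞} {σ : ℂ} {D : ℝ} (hD : D ≠ 0)
    (ha₁ : Measurable a₁) (haρ₁ : ∀ v, ‖a₁ v‖ₑ ≤ ρ v)
    (ha₂ : Measurable a₂) (haρ₂ : ∀ v, ‖a₂ v‖ₑ ≤ ρ v)
    (hδ : Measurable δ) (hδρ : ∀ v, ‖δ v‖ₑ ≤ ρ v) (hδa : ∀ v, a₂ v = a₁ v + D * δ v)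
    (hs₁ : ScatPair a₁ u₁ V₁ M) (hs₂ : ScatPair a₂ u₂ V₂ M) (hM : M ≠ ⊤)
    (hσ : σ = 1 ∨ σ = -1) :
    wsq ρ (fun z => (D : ℂ)⁻¹ * (scatComb u₂ V₂ σ z - scatComb u₁ V₁ σ z)) ≤
      2 * (1 + (ENNReal.ofReal (Real.exp Λ.toReal) ^ 2 * Λ) ^ 2) *
      (2 * (wsq ρ (dbarInv δ) + Λ ^ 2 *
        (2 * (1 + (ENNReal.ofReal (Real.exp Λ.toReal) ^ 2 * Λ) ^ 2) * wsq ρ (dbarInv a₂)))) := by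
  have hc : Measurable (fun z : ℂ => conj z) := continuous_conj.measurable
  have hD' : (D : ℂ) ≠ 0 := by exact_mod_cast hD
  have hab₁ := h.cauchyBound ha₁ haρ₁
  have hab₂ := h.cauchyBound ha₂ haρ₂
  have hδb := h.cauchyBound hδ hδρ
  have hσ1 := enorm_eq_one_of_sign hσ
  have hm₁ := hs₁.measurable_scatComb σ
  have hm₂ := hs₂.measurable_scatComb σ
  have hb₁ := hs₁.enorm_scatComb_le hσ
  have hb₂ := hs₂.enorm_scatComb_le hσ
  have he₁ := hs₁.scatComb_eq hM hab₁ hΛ hσ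
  have he₂ := hs₂.scatComb_eq hM hab₂ hΛ hσ
  have hn := h.wsq_scatComb_le hΛ ha₂ haρ₂ hs₂ hM hσ
  set n₁ := scatComb u₁ V₁ σ
  set n₂ := scatComb u₂ V₂ σ
  set M' := M + 1 + M
  have hM' : M' ≠ ⊤ := by finiteness
  set n : ℂ → ℂ := fun z => (D : ℂ)⁻¹ * (n₂ z - n₁ z) with hndef
  have hnm : Measurable n := by simp only [hndef]; fun_prop
  have hnM : ∀ z, ‖n z‖ₑ ≤ ‖(D : ℂ)⁻¹‖ₑ * (M' + M') := fun z => by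
    simp only [hndef, enorm_mul]
    exact mul_le_mul' le_rfl (enorm_sub_le.trans (add_le_add (hb₂ z) (hb₁ z)))
  have hσδ : CauchyBound (fun w => σ * δ w) Λ :=
    hδb.mono (by fun_prop) fun v => by rw [enorm_mul, hσ1, one_mul]
  have hσa : CauchyBound (fun w => σ * a₁ w) Λ :=
    hab₁.mono (by fun_prop) fun v => by rw [enorm_mul, hσ1, one_mul]
  have hδn : CauchyBound (fun w => σ * δ w * conj (n₂ w)) (M' * Λ) :=
    hσδ.mul (by fun_prop) fun v => by rw [RCLike.enorm_conj]; exact hb₂ v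
  have hn1 : CauchyBound (fun w => σ * a₁ w * conj (n₁ w)) (M' * Λ) :=
    hσa.mul (by fun_prop) fun v => by rw [RCLike.enorm_conj]; exact hb₁ v
  have hnn : CauchyBound (fun w => σ * a₁ w * conj (n w)) (‖(D : ℂ)⁻¹‖ₑ * (M' + M') * Λ) :=
    hσa.mul (by fun_prop) fun v => by rw [RCLike.enorm_conj]; exact hnM v
  have hDi : ‖(D : ℂ)⁻¹‖ₑ ≠ ⊤ := by finiteness
  have hDc : ‖(D : ℂ)‖ₑ ≠ ⊤ := by finiteness
  have hPδ := hδb.measurable_dbarInv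
  have hPδn := hδn.measurable_dbarInv
  have e1 : ∀ z, dbarInv a₂ z = dbarInv a₁ z + D * dbarInv δ z := fun z => by
    rw [← dbarInv_const_mul, ← hab₁.dbarInv_add (B' := ‖(D : ℂ)‖ₑ * Λ)]
    · simp_rw [← hδa]
    · simpa only [mul_comm] using hδb.mul (g := fun _ => (D : ℂ)) (by fun_prop) fun _ => le_rfl
    · exact hΛ
    · finiteness
  have e2 : ∀ z, dbarInv (fun w => σ * a₂ w * conj (n₂ w)) z =
      dbarInv (fun w => σ * a₁ w * conj (n₁ w)) z +
        D * (dbarInv (fun w => σ * δ w * conj (n₂ w)) z +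
          dbarInv (fun w => σ * a₁ w * conj (n w)) z) := fun z => by
    rw [← hδn.dbarInv_add hnn (by finiteness) (by finiteness), ← dbarInv_const_mul,
      ← hn1.dbarInv_add (B' := ‖(D : ℂ)‖ₑ * (M' * Λ + ‖(D : ℂ)⁻¹‖ₑ * (M' + M') * Λ))]
    · congr 1
      ext w
      have : conj (n₂ w) = conj (n₁ w) + D * conj (n w) := by
        simp only [hndef, map_mul, map_inv₀, conj_ofReal, map_sub]
        field_simp
        ring
      rw [hδa, this]
      ring
    · simpa only [mul_comm] using
        (hδn.add hnn).mul (g := fun _ => (D : ℂ)) (by fun_prop) fun _ => le_rfl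
    · finiteness
    · finiteness
  have heq : ∀ z, n z = (σ * dbarInv δ z + dbarInv (fun w => σ * δ w * conj (n₂ w)) z) +
      dbarInv (fun w => σ * a₁ w * conj (n w)) z := fun z => by
    have : n₂ z - n₁ z = D * ((σ * dbarInv δ z + dbarInv (fun w => σ * δ w * conj (n₂ w)) z) +
      dbarInv (fun w => σ * a₁ w * conj (n w)) z) := by
      rw [he₁ z, he₂ z, e1, e2]
      ring
    simp only [hndef]
    rw [this, inv_mul_cancel_left₀ hD']
  refine (h.lintegral_sq_le_of_eq hΛ (a := fun w => σ * a₁ w)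
    (y := fun z => σ * dbarInv δ z + dbarInv (fun w => σ * δ w * conj (n₂ w)) z)
    (N := Λ + M' * Λ) (by fun_prop) (fun v => ?_) hnm (by finiteness)
    hnM (by fun_prop) (by finiteness) (fun z => ?_) heq).trans (mul_le_mul' le_rfl ?_)
  · rw [enorm_mul, hσ1, one_mul]
    exact haρ₁ v
  · refine (enorm_add_le _ _).trans (add_le_add ?_ (hδn.enorm_le z))
    rw [enorm_mul, hσ1, one_mul]
    exact hδb.enorm_le z
  · refine (wsq_add_le h.1 (by fun_prop)).trans (mul_le_mul' le_rfl (add_le_add ?_ ?_))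
    · exact wsq_mono fun z => by rw [enorm_mul, hσ1, one_mul]
    · refine (h.lintegral_dbarInv_sq_le (fun v => ?_) (by fun_prop)).trans
        (mul_le_mul' le_rfl (le_trans (wsq_mono fun z => ?_) hn))
      · rw [enorm_mul, hσ1, one_mul]
        exact hδρ v
      · rw [RCLike.enorm_conj]

end PotBound

theorem wsq_le_of_add_self_eq_sub {ρ : ℂ → ℝ≥0∞} {f g h : ℂ → ℂ} {B : ℝ≥0∞} (hρ : Measurable ρ)
    (hg : Measurable g) (hgB : wsq ρ g ≤ B) (hhB : wsq ρ h ≤ B)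
    (hf : ∀ z, f z + f z = g z - h z) : wsq ρ f ≤ 4 * B := by
  calc wsq ρ f ≤ wsq ρ (fun z => g z + -h z) := wsq_mono fun z => by
        rw [← sub_eq_add_neg, ← hf, ← two_mul, enorm_mul]
        refine le_mul_of_one_le_left' ?_
        rw [← ofReal_norm, ← ENNReal.ofReal_one]
        exact ENNReal.ofReal_le_ofReal (by norm_num)
    _ ≤ 2 * (wsq ρ g + wsq ρ fun z => -h z) := wsq_add_le hρ hg
    _ ≤ 2 * (B + B) := by
        gcongr
        exact (wsq_mono fun z => (enorm_neg _).le).trans hhB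
    _ = _ := by ring

theorem ScatPair.integral_eq {a u V : ℂ → ℂ} {M A : ℝ≥0∞} (h : ScatPair a u V M) (hM : M ≠ ⊤)
    (ha : CauchyBound a A) (hA : A ≠ ⊤) (hai : Integrable a) :
    ∫ z, a z * conj (u z) = (∫ z, a z) - ∫ z, dzInv a z * (conj (a z) * V z) := by
  have hc : Measurable (fun z : ℂ => conj z) := continuous_conj.measurable
  have ham := ha.1
  have h1 := h.measurable_fst
  have h2 := h.measurable_snd
  have hca : CauchyBound (fun w => conj (a w)) A :=
    ha.mono (by fun_prop) fun v => by rw [RCLike.enorm_conj]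
  have hg : CauchyBound (fun w => conj (a w) * V w) (M * A) := hca.mul h2 h.snd_le
  have hconj : ∀ z, conj (u z) = 1 + dzInv (fun w => conj (a w) * V w) z := fun z => by
    rw [h.fst_eq z, map_add, map_one, conj_dbarInv]
    simp
  have hau : Integrable fun z => a z * conj (u z) := by
    refine hai.mul_bdd (c := M.toReal) (by fun_prop) (Eventually.of_forall fun z => ?_)
    rw [RCLike.norm_conj, ← toReal_enorm]
    exact ENNReal.toReal_mono hM (h.fst_le z)
  rw [sub_eq_add_neg, ← hg.integral_mul_dzInv (by finiteness) hai ham, ← sub_eq_iff_eq_add',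
    ← integral_sub hau hai]
  refine integral_congr_ae (Eventually.of_forall fun z => ?_)
  simp only [hconj]
  ring

/-- Lipschitz bound for the scattering integral at a fixed frequency. -/
theorem PotBound.exists_enorm_integral_sub_le {Λ : ℝ≥0∞} (hΛ : Λ ≠ ⊤) : ∃ C : ℝ≥0∞, C ≠ ⊤ ∧
    ∀ {ρ : ℂ → ℝ≥0∞}, PotBound ρ Λ → ∀ {a₁ a₂ δ u₁ V₁ u₂ V₂ : ℂ → ℂ} {M : ℝ≥0∞} {D : ℝ}, D ≠ 0 →
    Measurable a₁ → (∀ v, ‖a₁ v‖ₑ ≤ ρ v) → Integrable a₁ →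
    Measurable a₂ → (∀ v, ‖a₂ v‖ₑ ≤ ρ v) → Integrable a₂ →
    Measurable δ → (∀ v, ‖δ v‖ₑ ≤ ρ v) → Integrable δ → (∀ v, a₂ v = a₁ v + D * δ v) →
    ScatPair a₁ u₁ V₁ M → ScatPair a₂ u₂ V₂ M → M ≠ ⊤ →
    ‖(∫ z, a₂ z * conj (u₂ z)) - ∫ z, a₁ z * conj (u₁ z)‖ₑ ≤ ‖(D : ℂ)‖ₑ * (‖∫ z, δ z‖ₑ +
      C * (wsq ρ (dbarInv a₂) + wsq ρ (dbarInv δ) + wsq ρ (dzInv a₁) + wsq ρ (dzInv δ))) := by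
  set K : ℝ≥0∞ := 2 * (1 + (ENNReal.ofReal (Real.exp Λ.toReal) ^ 2 * Λ) ^ 2) with hK
  have hKt : K ≠ ⊤ := by finiteness
  refine ⟨3 + 2 * (4 * K) + 4 * (K * (2 * (1 + Λ ^ 2 * K))), by finiteness,
    fun {ρ} h {a₁ a₂ δ u₁ V₁ u₂ V₂ M D} hD ha₁ haρ₁ hai₁ ha₂ haρ₂ hai₂ hδ hδρ hδi hδa hs₁ hs₂ hM
      => ?_⟩
  have hc : Measurable (fun z : ℂ => conj z) := continuous_conj.measurable
  have hD' : (D : ℂ) ≠ 0 := by exact_mod_cast hD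
  have hρ := h.1
  have hab₁ := h.cauchyBound ha₁ haρ₁
  have hab₂ := h.cauchyBound ha₂ haρ₂
  have hδb := h.cauchyBound hδ hδρ
  have hV₁m := hs₁.measurable_snd
  have hV₂m := hs₂.measurable_snd
  set S : ℝ≥0∞ :=
    wsq ρ (dbarInv a₂) + wsq ρ (dbarInv δ) + wsq ρ (dzInv a₁) + wsq ρ (dzInv δ) with hS
  have hS₁ : wsq ρ (dbarInv a₂) ≤ S := (le_self_add.trans le_self_add).trans le_self_add
  have hS₂ : wsq ρ (dbarInv δ) ≤ S := (le_add_self.trans le_self_add).trans le_self_add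
  have hS₃ : wsq ρ (dzInv a₁) ≤ S := le_add_self.trans le_self_add
  have hS₄ : wsq ρ (dzInv δ) ≤ S := le_add_self
  have hV : wsq ρ V₂ ≤ 4 * (K * S) := by
    refine wsq_le_of_add_self_eq_sub hρ (hs₂.measurable_scatComb 1)
      ((h.wsq_scatComb_le hΛ ha₂ haρ₂ hs₂ hM (σ := 1) (by simp)).trans (mul_le_mul' le_rfl hS₁))
      ((h.wsq_scatComb_le hΛ ha₂ haρ₂ hs₂ hM (σ := -1) (by simp)).trans (mul_le_mul' le_rfl hS₁))
      fun z => ?_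
    simp only [scatComb]
    ring
  set W : ℂ → ℂ := fun z => (D : ℂ)⁻¹ * (V₂ z - V₁ z) with hWdef
  have hVW : ∀ z, V₂ z - V₁ z = D * W z := fun z => by
    simp only [hWdef]
    rw [mul_inv_cancel_left₀ hD']
  have hWm : Measurable W := by simp only [hWdef]; fun_prop
  have hW : wsq ρ W ≤ 4 * (K * (2 * (S + Λ ^ 2 * (K * S)))) := by
    have hσ : ∀ σ : ℂ, σ = 1 ∨ σ = -1 →
        wsq ρ (fun z => (D : ℂ)⁻¹ * (scatComb u₂ V₂ σ z - scatComb u₁ V₁ σ z)) ≤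
          K * (2 * (S + Λ ^ 2 * (K * S))) := fun σ hσ => by
      refine (h.wsq_scatComb_sub_le hΛ hD ha₁ haρ₁ ha₂ haρ₂ hδ hδρ hδa hs₁ hs₂ hM hσ).trans ?_
      rw [← hK]
      gcongr
    have hm₁ := hs₁.measurable_scatComb 1
    have hm₂ := hs₂.measurable_scatComb 1
    refine wsq_le_of_add_self_eq_sub hρ (by fun_prop) (hσ 1 (by simp)) (hσ (-1) (by simp))
      fun z => ?_
    simp only [scatComb, hWdef]
    ring
  have hz₁ := measurable_dzInv ha₁
  have hzδ := measurable_dzInv hδ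
  have hint : ∀ {a V : ℂ → ℂ}, CauchyBound a Λ → Integrable a → Measurable V →
      (∀ z, ‖V z‖ₑ ≤ M) → Integrable fun z => dzInv a z * (conj (a z) * V z) := by
    intro a V ha hai hV hVM
    have ham := ha.1
    have hz := measurable_dzInv ham
    have hai' : Integrable fun z => conj (a z) := by
      refine hai.mono (by fun_prop) (Eventually.of_forall fun z => ?_)
      rw [RCLike.norm_conj]
    refine (hai'.mul_bdd (c := M.toReal) (by fun_prop) (Eventually.of_forall fun z => ?_)).bdd_mul
      (c := Λ.toReal) (by fun_prop) (Eventually.of_forall fun z => ?_)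
    · rw [← toReal_enorm]
      exact ENNReal.toReal_mono hM (hVM z)
    · rw [← toReal_enorm]
      exact ENNReal.toReal_mono hΛ ((enorm_dzInv_le _ _).trans (ha.2 z))
  have hzadd : ∀ z, dzInv a₂ z = dzInv a₁ z + D * dzInv δ z := fun z => by
    simp only [dzInv]
    rw [mul_left_comm, ← mul_add, ← integral_const_mul (D : ℂ), ← integral_add
      (hab₁.integrable_conj hΛ z) ((hδb.integrable_conj hΛ z).const_mul _)]
    congr 2
    ext w
    rw [hδa]
    ring
  have htri : ‖∫ z, (dzInv a₂ z * (conj (a₂ z) * V₂ z) - dzInv a₁ z * (conj (a₁ z) * V₁ z))‖ₑ ≤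
      ‖(D : ℂ)‖ₑ * (wsq ρ (dzInv δ) + 2 * wsq ρ V₂ + 2 * wsq ρ (dzInv a₁) + wsq ρ W) := by
    refine (enorm_integral_le_lintegral_enorm _).trans ?_
    calc _ ≤ ∫⁻ z, ‖(D : ℂ)‖ₑ * (ρ z * ‖dzInv δ z‖ₑ ^ 2 + 2 * (ρ z * ‖V₂ z‖ₑ ^ 2) +
            2 * (ρ z * ‖dzInv a₁ z‖ₑ ^ 2) + ρ z * ‖W z‖ₑ ^ 2) := by
          refine lintegral_mono fun z => ?_
          have e : dzInv a₂ z * (conj (a₂ z) * V₂ z) - dzInv a₁ z * (conj (a₁ z) * V₁ z) =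
              D * (conj (a₂ z) * (dzInv δ z * V₂ z) + conj (δ z) * (dzInv a₁ z * V₂ z) +
                conj (a₁ z) * (dzInv a₁ z * W z)) := by
            have := hVW z
            rw [hzadd, hδa, map_add, map_mul, conj_ofReal]
            linear_combination (dzInv a₁ z * conj (a₁ z)) * this
          have hb : ∀ {x a b : ℂ}, ‖x‖ₑ ≤ ρ z → ‖conj x * (a * b)‖ₑ ≤
              ρ z * (‖a‖ₑ ^ 2 + ‖b‖ₑ ^ 2) := fun {x a b} hx => by
            rw [enorm_mul, enorm_mul, RCLike.enorm_conj]
            exact mul_le_mul' hx (ENNReal.mul_le_sq_add_sq _ _)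
          rw [e, enorm_mul]
          refine mul_le_mul' le_rfl ?_
          refine (enorm_add_le _ _).trans ((add_le_add ((enorm_add_le _ _).trans
            (add_le_add (hb (haρ₂ z)) (hb (hδρ z)))) (hb (haρ₁ z))).trans (le_of_eq ?_))
          ring
      _ = _ := by
          simp only [wsq]
          rw [lintegral_const_mul _ (by fun_prop), lintegral_add_left (by fun_prop),
            lintegral_add_left (by fun_prop), lintegral_add_left (by fun_prop),
            lintegral_const_mul _ (by fun_prop), lintegral_const_mul _ (by fun_prop)]
  have hlin : (∫ z, a₂ z) - ∫ z, a₁ z = D * ∫ z, δ z := by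
    rw [← integral_const_mul, ← integral_sub hai₂ hai₁]
    congr 1
    ext z
    rw [hδa]
    ring
  rw [hs₁.integral_eq hM hab₁ hΛ hai₁, hs₂.integral_eq hM hab₂ hΛ hai₂, sub_sub_sub_comm, hlin,
    ← integral_sub (hint hab₂ hai₂ hV₂m hs₂.snd_le) (hint hab₁ hai₁ hV₁m hs₁.snd_le)]
  refine enorm_sub_le.trans ?_
  rw [enorm_mul, mul_add]
  refine add_le_add le_rfl (htri.trans (mul_le_mul' le_rfl ?_))
  calc _ ≤ S + 2 * (4 * (K * S)) + 2 * S + 4 * (K * (2 * (S + Λ ^ 2 * (K * S)))) := by gcongr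
    _ = _ := by ring

theorem HssNorm_const_mul (s : ℝ) (c : ℂ) (q : ℂ → ℂ) :
    HssNorm s (fun z => c * q z) = ‖c‖ₑ * HssNorm s q := by
  have hFT : ∀ ξ, FT (fun z => c * q z) ξ = c * FT q ξ := fun ξ => by
    simp only [FT]
    rw [← integral_const_mul]
    congr 1
    ext z
    ring
  have h1 : ∀ f : ℂ → ℂ, eLpNorm (fun z => c * f z) 2 volume = ‖c‖ₑ * eLpNorm f 2 volume :=
    fun f => eLpNorm_const_smul c f 2 volume
  simp only [HssNorm, hFT, mul_left_comm _ c, h1, mul_max]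

theorem KatoBound.add {t : ℝ} {ρ ρ' : ℂ → ℝ≥0∞} {Λ Λ' : ℝ≥0∞} (h : KatoBound t ρ Λ)
    (h' : KatoBound t ρ' Λ') : KatoBound t (fun v => ρ v + ρ' v) (Λ + Λ') := by
  have hm := h.1
  have hm' := h'.1
  refine ⟨by fun_prop, fun z => ?_⟩
  simp only [add_mul]
  rw [lintegral_add_left (by fun_prop)]
  exact add_le_add (h.2 z) (h'.2 z)

theorem KatoBound.mono {t : ℝ} {ρ : ℂ → ℝ≥0∞} {Λ Λ' : ℝ≥0∞} (h : KatoBound t ρ Λ)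
    (hΛ : Λ ≤ Λ') : KatoBound t ρ Λ' :=
  ⟨h.1, fun z => (h.2 z).trans hΛ⟩

theorem KatoBound.potBound {t : ℝ} {ρ : ℂ → ℝ≥0∞} {Λ : ℝ≥0∞} (h : KatoBound t ρ Λ)
    (ht : 0 < t) : PotBound ρ Λ :=
  ⟨h.1, h.inv ht⟩

section

variable {ρ : ℂ → ℝ≥0∞} {p : ℂ → ℂ}

theorem measurable_wsq_dbarInv (hρ : Measurable ρ) (hp : Measurable p) :
    Measurable fun k => wsq ρ (dbarInv fun w => ek (-k) w * p w) := by
  have h := measurable_integral_ek_mul (K := fun z v => (z - v)⁻¹) hp (by fun_prop)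
  have : Measurable fun x : ℂ × ℂ => ρ x.2 *
      ‖(Real.pi : ℂ)⁻¹ * ∫ v, ek (-x.1) v * (p v * (x.2 - v)⁻¹)‖ₑ ^ 2 := by fun_prop
  simpa only [wsq, dbarInv, div_eq_mul_inv, mul_assoc] using this.lintegral_prod_right'

theorem measurable_wsq_dzInv (hρ : Measurable ρ) (hp : Measurable p) :
    Measurable fun k => wsq ρ (dzInv fun w => ek (-k) w * p w) := by
  have hc : Measurable (fun z : ℂ => conj z) := continuous_conj.measurable
  have h := measurable_integral_ek_mul (K := fun z v => (conj z - conj v)⁻¹) hp (by fun_prop)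
  have : Measurable fun x : ℂ × ℂ => ρ x.2 *
      ‖(Real.pi : ℂ)⁻¹ * ∫ v, ek (-x.1) v * (p v * (conj x.2 - conj v)⁻¹)‖ₑ ^ 2 := by fun_prop
  simpa only [wsq, dzInv, div_eq_mul_inv, mul_assoc] using this.lintegral_prod_right'

end

theorem enorm_inv_le_inv_enorm (x : ℂ) : ‖x⁻¹‖ₑ ≤ ‖x‖ₑ⁻¹ := by
  by_cases hx : x = 0
  · simp [hx]
  · rw [enorm_inv hx]

theorem exists_lintegral_wsq_sq_le {t : ℝ} (ht : 0 < t) (ht1 : t < 1) :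
    ∃ C : ℝ≥0∞, C ≠ ⊤ ∧ ∀ (p : ℂ → ℂ) (A : ℝ≥0∞), CauchyBound p A → A ≠ ⊤ →
      ∀ ρ Λ, KatoBound t ρ Λ →
      ∫⁻ k, wsq ρ (dbarInv fun w => ek (-k) w * p w) ^ 2 ≤ C * (∫⁻ v, ‖p v‖ₑ ^ 2) ^ 2 * Λ ^ 2 ∧
      ∫⁻ k, wsq ρ (dzInv fun w => ek (-k) w * p w) ^ 2 ≤ C * (∫⁻ v, ‖p v‖ₑ ^ 2) ^ 2 * Λ ^ 2 := by
  obtain ⟨C, hC, h⟩ := exists_lintegral_sq_lintegral_le ht ht1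
  refine ⟨C, hC, fun p A hp hA ρ Λ hρ => ⟨?_, ?_⟩⟩
  · refine le_trans (lintegral_mono fun k => ?_) (h p (fun z v => (z - v)⁻¹) hp.1 (by fun_prop)
      (fun z v => enorm_inv_le_inv_enorm _) (fun z => hp.integrable hA z) ρ Λ hρ)
    refine pow_le_pow_left' (lintegral_mono fun z => ?_) 2
    simp only [dbarInv, div_eq_mul_inv, mul_assoc]
    rw [enorm_mul]
    gcongr
    exact mul_le_of_le_one_left' enorm_pi_inv_le_one
  · have hc : Measurable (fun z : ℂ => conj z) := continuous_conj.measurable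
    refine le_trans (lintegral_mono fun k => ?_) (h p (fun z v => (conj z - conj v)⁻¹) hp.1
      (by fun_prop) (fun z v => (enorm_inv_le_inv_enorm _).trans (by
        rw [← map_sub, RCLike.enorm_conj])) (fun z => hp.integrable_conj hA z) ρ Λ hρ)
    refine pow_le_pow_left' (lintegral_mono fun z => ?_) 2
    simp only [dzInv, div_eq_mul_inv, mul_assoc]
    rw [enorm_mul]
    gcongr
    exact mul_le_of_le_one_left' enorm_pi_inv_le_one

theorem IsScattering.exists_scatPair {q : ℂ → ℂ} {k : ℂ} {u V : ℂ → ℂ}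
    (h : IsScattering q k u V) :
    ∃ M : ℝ≥0∞, M ≠ ⊤ ∧ ∀ M' ≥ M, ScatPair (fun w => ek (-k) w * q w) u V M' := by
  obtain ⟨hu, hub, hV, hVb, h1, h2⟩ := h
  obtain ⟨A, hA⟩ := hub.exists_norm_le
  obtain ⟨B, hB⟩ := hVb.exists_norm_le
  refine ⟨ENNReal.ofReal A + ENNReal.ofReal B, by finiteness, fun M' hM' =>
    ⟨hu.measurable, hV.measurable, fun z => ?_, fun z => ?_, h1, h2⟩⟩
  · rw [← ofReal_norm]
    exact (ENNReal.ofReal_le_ofReal (hA _ ⟨z, rfl⟩)).trans (le_self_add.trans hM')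
  · rw [← ofReal_norm]
    exact (ENNReal.ofReal_le_ofReal (hB _ ⟨z, rfl⟩)).trans (le_add_self.trans hM')

theorem enorm_I_div_two_pi_le_one : ‖Complex.I / (2 * (Real.pi : ℂ))‖ₑ ≤ 1 := by
  rw [← ofReal_norm, ← ENNReal.ofReal_one]
  refine ENNReal.ofReal_le_ofReal ?_
  rw [norm_div, Complex.norm_I, norm_mul, Complex.norm_of_nonneg Real.pi_pos.le, Complex.norm_ofNat]
  rw [div_le_one (by positivity)]
  linarith [Real.pi_gt_three]

theorem ENNReal.add_four_sq_le (a b c d : ℝ≥0∞) :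
    (a + b + c + d) ^ 2 ≤ 4 * (a ^ 2 + b ^ 2 + c ^ 2 + d ^ 2) := by
  calc (a + b + c + d) ^ 2 = ((a + b) + (c + d)) ^ 2 := by ring
    _ ≤ 2 * ((a + b) ^ 2 + (c + d) ^ 2) := ENNReal.add_sq_le _ _
    _ ≤ 2 * (2 * (a ^ 2 + b ^ 2) + 2 * (c ^ 2 + d ^ 2)) := by
        gcongr <;> exact ENNReal.add_sq_le _ _
    _ = _ := by ring

theorem exists_lintegral_scatTransform_sub_sq_le {s : ℝ} (hs : 0 < s) (hs1 : s < 1) (R : ℝ) :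
    ∃ C : ℝ≥0∞, C ≠ ⊤ ∧ ∀ (q₁ q₂ : 𝓢(ℂ, ℂ)) (u₁ u₂ v₁ v₂ : ℂ → ℂ → ℂ) (D : ℝ), 0 < D →
      HssNorm s (⇑q₁) ≤ ENNReal.ofReal R → HssNorm s (⇑q₂) ≤ ENNReal.ofReal R →
      HssNorm s (fun z : ℂ => q₂ z - q₁ z) ≤ ENNReal.ofReal D →
      (∀ k : ℂ, IsScattering (⇑q₁) k (fun z => u₁ z k) (fun z => u₂ z k)) →
      (∀ k : ℂ, IsScattering (⇑q₂) k (fun z => v₁ z k) (fun z => v₂ z k)) →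
      ∫⁻ k, ‖scatTransform (⇑q₂) v₁ k - scatTransform (⇑q₁) u₁ k‖ₑ ^ 2 ≤
        C * ENNReal.ofReal D ^ 2 := by
  obtain ⟨CK, hCK, hK⟩ := exists_katoBound hs hs1
  obtain ⟨CF, hCF, hF⟩ := exists_lintegral_wsq_sq_le (t := s / 2) (by linarith) (by linarith)
  set Λ : ℝ≥0∞ := CK * ENNReal.ofReal R + CK * ENNReal.ofReal R + CK * 1 with hΛdef
  have hΛ : Λ ≠ ⊤ := by finiteness
  obtain ⟨CE, hCE, hE⟩ := PotBound.exists_enorm_integral_sub_le hΛ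
  set R' : ℝ≥0∞ := ENNReal.ofReal R with hR'
  set B : ℝ≥0∞ := CF * (R' ^ 2) ^ 2 * Λ ^ 2 + CF * (1 ^ 2) ^ 2 * Λ ^ 2 +
    CF * (R' ^ 2) ^ 2 * Λ ^ 2 + CF * (1 ^ 2) ^ 2 * Λ ^ 2 with hB
  refine ⟨2 * (CE ^ 2 * (4 * B) + ENNReal.ofReal ((2 * Real.pi) ^ 2) * 1 ^ 2), by finiteness,
    fun q₁ q₂ u₁ u₂ v₁ v₂ D hD hq₁ hq₂ hd hsc₁ hsc₂ => ?_⟩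
  have hD' : (D : ℂ) ≠ 0 := by exact_mod_cast hD.ne'
  set d : 𝓢(ℂ, ℂ) := (D : ℂ)⁻¹ • (q₂ - q₁) with hddef
  have hdv : ∀ v, d v = (D : ℂ)⁻¹ * (q₂ v - q₁ v) := fun v => rfl
  have hDen : ‖(D : ℂ)‖ₑ = ENNReal.ofReal D := by
    rw [← ofReal_norm, Complex.norm_of_nonneg hD.le]
  have hd1 : HssNorm s d ≤ 1 := by
    have : (d : ℂ → ℂ) = fun v => (D : ℂ)⁻¹ * (q₂ v - q₁ v) := funext hdv
    rw [this, HssNorm_const_mul, enorm_inv hD', hDen]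
    refine (mul_le_mul' le_rfl hd).trans ?_
    rw [ENNReal.inv_mul_cancel (by simpa using hD) (by simp)]
  set ρ : ℂ → ℝ≥0∞ := fun v => ‖q₁ v‖ₑ + ‖q₂ v‖ₑ + ‖d v‖ₑ with hρdef
  have hKρ : KatoBound (s / 2) ρ Λ :=
    (((hK q₁).mono (mul_le_mul' le_rfl hq₁)).add ((hK q₂).mono (mul_le_mul' le_rfl hq₂))).add
      ((hK d).mono (mul_le_mul' le_rfl hd1))
  have hP := hKρ.potBound (by linarith)
  have hρ := hKρ.1
  have hm : ∀ q : 𝓢(ℂ, ℂ), Measurable q := fun q => q.continuous.measurable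
  have hekm : ∀ k, Measurable (ek k) := fun k =>
    (continuous_ek.comp (Continuous.prodMk_right k)).measurable
  have hekq : ∀ k (q : 𝓢(ℂ, ℂ)), Measurable fun w => ek (-k) w * q w := fun k q =>
    (hekm _).mul (hm q)
  have heki : ∀ k (q : 𝓢(ℂ, ℂ)), Integrable fun w => ek (-k) w * q w := fun k q =>
    q.integrable.bdd_mul (c := 1) (hekm _).aestronglyMeasurable
      (Eventually.of_forall fun z => (norm_ek _ _).le)
  have hle₁ : ∀ v, ‖q₁ v‖ₑ ≤ ρ v := fun v => le_self_add.trans le_self_add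
  have hle₂ : ∀ v, ‖q₂ v‖ₑ ≤ ρ v := fun v => le_add_self.trans le_self_add
  have hled : ∀ v, ‖d v‖ₑ ≤ ρ v := fun v => le_add_self
  have hek : ∀ k (q : 𝓢(ℂ, ℂ)), (∀ v, ‖q v‖ₑ ≤ ρ v) → ∀ v, ‖ek (-k) v * q v‖ₑ ≤ ρ v :=
    fun k q h v => by rw [enorm_mul, enorm_ek, one_mul]; exact h v
  have hpt : ∀ k, ‖scatTransform (⇑q₂) v₁ k - scatTransform (⇑q₁) u₁ k‖ₑ ^ 2 ≤
      ENNReal.ofReal D ^ 2 * (2 * (CE ^ 2 * (4 *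
        (wsq ρ (dbarInv fun w => ek (-k) w * q₂ w) ^ 2 +
          wsq ρ (dbarInv fun w => ek (-k) w * d w) ^ 2 +
          wsq ρ (dzInv fun w => ek (-k) w * q₁ w) ^ 2 +
          wsq ρ (dzInv fun w => ek (-k) w * d w) ^ 2)) + ‖∫ w, ek (-k) w * d w‖ₑ ^ 2)) := by
    intro k
    obtain ⟨M₁, hM₁, h₁⟩ := (hsc₁ k).exists_scatPair
    obtain ⟨M₂, hM₂, h₂⟩ := (hsc₂ k).exists_scatPair
    have key := hE hP hD.ne' (hekq k q₁) (hek k q₁ hle₁) (heki k q₁) (hekq k q₂) (hek k q₂ hle₂)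
      (heki k q₂) (hekq k d) (hek k d hled) (heki k d)
      (fun v => by rw [hdv]; field_simp; ring) (h₁ (M₁ + M₂) le_self_add)
      (h₂ (M₁ + M₂) le_add_self) (by finiteness)
    rw [scatTransform, scatTransform, ← mul_sub, enorm_mul]
    refine (pow_le_pow_left' ((mul_le_of_le_one_left' enorm_I_div_two_pi_le_one).trans key)
      2).trans ?_
    rw [hDen, mul_pow]
    refine mul_le_mul' le_rfl ((ENNReal.add_sq_le _ _).trans (mul_le_mul' le_rfl ?_))
    rw [add_comm, mul_pow]
    gcongr
    exact ENNReal.add_four_sq_le _ _ _ _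
  have hcb : ∀ q : 𝓢(ℂ, ℂ), (∀ v, ‖q v‖ₑ ≤ ρ v) → CauchyBound q Λ := fun q h =>
    hP.cauchyBound (hm q) h
  have hL2 : ∀ (q : 𝓢(ℂ, ℂ)) (N : ℝ≥0∞), HssNorm s q ≤ N → ∫⁻ v, ‖q v‖ₑ ^ 2 ≤ N ^ 2 :=
    fun q N h => (lintegral_enorm_sq_le_HssNorm q s).trans (pow_le_pow_left' h 2)
  have hbar : ∀ (q : 𝓢(ℂ, ℂ)) (N : ℝ≥0∞), (∀ v, ‖q v‖ₑ ≤ ρ v) → HssNorm s q ≤ N →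
      ∫⁻ k, wsq ρ (dbarInv fun w => ek (-k) w * q w) ^ 2 ≤ CF * (N ^ 2) ^ 2 * Λ ^ 2 :=
    fun q N h hN => by
      refine (hF q Λ (hcb q h) hΛ ρ Λ hKρ).1.trans ?_
      have := hL2 q N hN
      gcongr
  have hz : ∀ (q : 𝓢(ℂ, ℂ)) (N : ℝ≥0∞), (∀ v, ‖q v‖ₑ ≤ ρ v) → HssNorm s q ≤ N →
      ∫⁻ k, wsq ρ (dzInv fun w => ek (-k) w * q w) ^ 2 ≤ CF * (N ^ 2) ^ 2 * Λ ^ 2 :=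
    fun q N h hN => by
      refine (hF q Λ (hcb q h) hΛ ρ Λ hKρ).2.trans ?_
      have := hL2 q N hN
      gcongr
  have m₁ := measurable_wsq_dbarInv hρ (hm q₂)
  have m₂ := measurable_wsq_dbarInv hρ (hm d)
  have m₃ := measurable_wsq_dzInv hρ (hm q₁)
  have m₄ := measurable_wsq_dzInv hρ (hm d)
  refine (lintegral_mono hpt).trans ?_
  rw [lintegral_const_mul' _ _ (by finiteness), lintegral_const_mul' _ _ (by simp),
    lintegral_add_left (by fun_prop), lintegral_const_mul' _ _ (by finiteness),
    lintegral_const_mul' _ _ (by simp), lintegral_add_left (by fun_prop),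
    lintegral_add_left (by fun_prop), lintegral_add_left (by fun_prop), mul_comm]
  have hlin := (lintegral_enorm_integral_ek_sq_le d.integrable).trans
    (mul_le_mul' le_rfl (hL2 d 1 hd1))
  have b₁ := hbar q₂ R' hle₂ hq₂
  have b₂ := hbar d 1 hled hd1
  have b₃ := hz q₁ R' hle₁ hq₁
  have b₄ := hz d 1 hled hd1
  gcongr
  exact add_le_add (add_le_add (add_le_add b₁ b₂) b₃) b₄

/-- Theorem 3.4: local Lipschitz continuity of the scattering transform on
`H^{s,s}`, `0 < s < 1`. -/
theorem stmt17 (s : ℝ) (hs : s ∈ Set.Ioo (0 : ℝ) 1) (R : ℝ) (hR : 0 < R) :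
    ∃ C : ℝ, 0 < C ∧ ∀ (q₁ q₂ : 𝓢(ℂ, ℂ)) (u₁ u₂ v₁ v₂ : ℂ → ℂ → ℂ),
      HssNorm s (⇑q₁) ≤ ENNReal.ofReal R → HssNorm s (⇑q₂) ≤ ENNReal.ofReal R →
      (∀ k : ℂ, IsScattering (⇑q₁) k (fun z => u₁ z k) (fun z => u₂ z k)) →
      (∀ k : ℂ, IsScattering (⇑q₂) k (fun z => v₁ z k) (fun z => v₂ z k)) →
      eLpNorm (fun k : ℂ => scatTransform (⇑q₂) v₁ k - scatTransform (⇑q₁) u₁ k) 2 volume ≤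
        ENNReal.ofReal C * HssNorm s (fun z : ℂ => q₂ z - q₁ z) := by
  obtain ⟨C, hC, h⟩ := exists_lintegral_scatTransform_sub_sq_le hs.1 hs.2 R
  have hCt : C ^ (1 / 2 : ℝ) ≠ ⊤ := by finiteness
  refine ⟨(C ^ (1 / 2 : ℝ)).toReal + 1, by positivity, fun q₁ q₂ u₁ u₂ v₁ v₂ h₁ h₂ hs₁ hs₂ => ?_⟩
  set N := HssNorm s (fun z : ℂ => q₂ z - q₁ z) with hN
  rw [ENNReal.ofReal_add (by positivity) zero_le_one, ENNReal.ofReal_toReal hCt,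
    ENNReal.ofReal_one]
  by_cases hNt : N = ⊤
  · rw [hNt, ENNReal.mul_top (by simp)]
    exact le_top
  refine le_trans ?_ (mul_le_mul' (le_self_add (b := 1)) le_rfl)
  have hlim : Tendsto (fun ε : ℝ => C ^ (1 / 2 : ℝ) * ENNReal.ofReal (N.toReal + ε)) (𝓝[>] 0)
      (𝓝 (C ^ (1 / 2 : ℝ) * N)) := by
    refine ENNReal.Tendsto.const_mul ?_ (Or.inr hCt)
    have hcont : Continuous fun ε : ℝ => ENNReal.ofReal (N.toReal + ε) :=
      ENNReal.continuous_ofReal.comp (by fun_prop)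
    simpa [ENNReal.ofReal_toReal hNt] using (hcont.tendsto 0).mono_left nhdsWithin_le_nhds
  refine ge_of_tendsto hlim ?_
  filter_upwards [self_mem_nhdsWithin] with ε hε
  rw [Set.mem_Ioi] at hε
  refine ENNReal.le_rpow_half_mul_of_sq_le ?_
  rw [eLpNorm_two_sq]
  refine h q₁ q₂ u₁ u₂ v₁ v₂ _ (add_pos_of_nonneg_of_pos ENNReal.toReal_nonneg hε) h₁ h₂ ?_
    hs₁ hs₂
  rw [← hN]
  refine (ENNReal.ofReal_toReal hNt).ge.trans (ENNReal.ofReal_le_ofReal ?_)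
  exact le_add_of_nonneg_right hε.le
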